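/- arXiv:2509.20797 — 2 statements merged into one kernel-verified Lean document; each statement's English description precedes it below -/
import Mathlib

section
/- Let L ∈ N and let F : X → R be bounded and measurable with respect to the coordinates in Λ_L = {−L,…,L}^d. Then the map ρ ↦ E_ρ[F] is infinitely differentiable on (0,1), and for every n ≥ 1 the perturbation formula holds: (d^n/dρ^n) E_ρ[F] = n! · Σ_{Y∈K_n} E_ρ[D_Y F], where the sum has only finitely many nonzero terms (only Y ⊆ Λ_L contribute). -/
/-!
A function `G` depending only on the coordinates in a finite set `Λ` has expectation
`E_ρ[G] = ∑_{S ⊆ Λ} (∏_{x ∈ Λ} w_ρ(S, x)) G(1_S)`, where `w_ρ(S, x)` is `ρ` for `x ∈ S` and `1 - ρ`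
otherwise (`integral_local`).  The weights are affine in the parameter,
`w_r(S, x) = (r - ρ) ε(S, x) + w_ρ(S, x)` with `ε = ±1`.  Multiplying out the product over `Λ`
(`Finset.prod_add`), the coefficient of `(r - ρ)^{|Y|}` contributed by `Y ⊆ Λ` replaces the weights
in `Y` by signs, and integrating `D_Y F` against `P_ρ` produces exactly this coefficient
(`integral_glauber`).  Hence
`E_r[F] = ∑_{Y ⊆ Λ} (r - ρ)^{|Y|} E_ρ[D_Y F]` for all `r, ρ ∈ (0,1)` (`integral_expansion`):
a polynomial in `r`, already in Taylor form at `ρ`, whose `n`-th derivative at `ρ` can be read off.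
-/

open MeasureTheory Filter
open scoped ENNReal NNReal

noncomputable section

abbrev Zd (d : ℕ) := Fin d → ℤ
abbrev Config (d : ℕ) := Zd d → Bool

def stdBasis (d : ℕ) (i : Fin d) : Zd d := fun j => if j = i then 1 else 0

def box (d : ℕ) (L : ℕ) : Finset (Zd d) :=
  Fintype.piFinset fun _ => Finset.Icc (-(L : ℤ)) (L : ℤ)

/-- `P` is the product Bernoulli(ρ) measure on `X = {0,1}^{ℤ^d}`: it is a probability
measure under which the coordinates are i.i.d. Bernoulli(ρ). -/
def IsBernoulliProduct {d : ℕ} (ρ : ℝ) (P : Measure (Config d)) : Prop :=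
  IsProbabilityMeasure P ∧
    ∀ (S : Finset (Zd d)) (b : Zd d → Bool),
      P {η | ∀ x ∈ S, η x = b x} = ∏ x ∈ S, ENNReal.ofReal (if b x then ρ else 1 - ρ)

/-- The configuration `η^{x,y}` with the occupation values at `x` and `y` exchanged. -/
def exchange {d : ℕ} (x y : Zd d) (η : Config d) : Config d :=
  fun z => if z = x then η y else if z = y then η x else η z

/-- The Kawasaki operator `π_{x,y} F (η) = F (η^{x,y}) - F η`. -/
def kawasaki {d : ℕ} (x y : Zd d) (F : Config d → ℝ) (η : Config d) : ℝ :=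
  F (exchange x y η) - F η

/-- `F` depends only on the coordinates in `Λ`. -/
def localOn {d : ℕ} (F : Config d → ℝ) (Λ : Finset (Zd d)) : Prop :=
  ∀ η η' : Config d, (∀ x ∈ Λ, η x = η' x) → F η = F η'

/-- The configuration agreeing with `η` off `Y`, and on `Y` equal to `1` on `S` and `0`
on `Y \ S`. -/
def setOn {d : ℕ} (Y S : Finset (Zd d)) (η : Config d) : Config d :=
  fun z => if z ∈ Y then decide (z ∈ S) else η z

/-- The iterated Glauber derivative `D_Y F = ∏_{x ∈ Y} D_x F`, where
`D_x F (η) = F (η^x_+) - F (η^x_-)`; explicitly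
`D_Y F (η) = ∑_{S ⊆ Y} (-1)^{|Y| - |S|} F (η with coordinates in S set to 1 and in Y∖S set to 0)`. -/
def glauber {d : ℕ} (Y : Finset (Zd d)) (F : Config d → ℝ) (η : Config d) : ℝ :=
  ∑ S ∈ Y.powerset, (-1 : ℝ) ^ (Y.card - S.card) * F (setOn Y S η)

/-- `η̄_Y = ∏_{x ∈ Y} (η_x - ρ)`. -/
def etaBar {d : ℕ} (ρ : ℝ) (Y : Finset (Zd d)) (η : Config d) : ℝ :=
  ∏ x ∈ Y, ((if η x then (1 : ℝ) else 0) - ρ)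

/-- `K_n`, the collection of `n`-element subsets of `ℤ^d`. -/
abbrev Kn (d n : ℕ) := {Y : Finset (Zd d) // Y.card = n}

/-- Translation: `τ_x F (η) = F (τ_x η)` with `(τ_x η) y = η (x + y)`. -/
def transl {d : ℕ} (x : Zd d) (F : Config d → ℝ) : Config d → ℝ :=
  fun η => F fun y => η (x + y)

/-- The regularization operator `R_L u = |Λ_L|⁻¹ ∑_{x ∈ Λ_L} τ_x u`. -/
def regularize {d : ℕ} (L : ℕ) (u : Config d → ℝ) : Config d → ℝ :=
  fun η => ((box d L).card : ℝ)⁻¹ * ∑ x ∈ box d L, transl x u η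

/-- For `f ∈ ℓ¹(K_n)` the chaos `I_n(f)(η) = ∑_{Y ∈ K_n} f(Y) η̄_Y(η)`, defined pointwise
(the series converges absolutely since `|η̄_Y| ≤ 1`). -/
def chaosFn {d n : ℕ} (ρ : ℝ) (f : Kn d n → ℝ) (η : Config d) : ℝ :=
  ∑' Y : Kn d n, f Y * etaBar ρ (Y : Finset (Zd d)) η

/-- The configuration `1_S` whose occupied sites are exactly those in `S`. -/
def ind {d : ℕ} (S : Finset (Zd d)) : Config d := fun z => decide (z ∈ S)

/-- The Bernoulli(ρ) weight of the occupation value of `1_S` at `x`. -/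
def weight {d : ℕ} (ρ : ℝ) (S : Finset (Zd d)) (x : Zd d) : ℝ := if x ∈ S then ρ else 1 - ρ

/-- The derivative of `weight ρ S x` in `ρ`: the sign `1` on `S` and `-1` off `S`. -/
def sgn {d : ℕ} (S : Finset (Zd d)) (x : Zd d) : ℝ := if x ∈ S then 1 else -1

/-- The cylinder event that `η` agrees with `1_S` on `Λ`. -/
def cyl {d : ℕ} (Λ S : Finset (Zd d)) : Set (Config d) := {η | ∀ x ∈ Λ, η x = ind S x}

lemma measurableSet_cyl {d : ℕ} (Λ S : Finset (Zd d)) : MeasurableSet (cyl Λ S) := by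
  have : cyl Λ S = ⋂ x ∈ Λ, (fun η : Config d => η x) ⁻¹' {ind S x} := by
    ext η; simp [cyl]
  rw [this]
  exact Finset.measurableSet_biInter _ fun x _ => measurable_pi_apply x (measurableSet_singleton _)

lemma measureReal_cyl {d : ℕ} {ρ : ℝ} (hρ : ρ ∈ Set.Ioo (0 : ℝ) 1) {P : Measure (Config d)}
    (hP : IsBernoulliProduct ρ P) (Λ S : Finset (Zd d)) :
    P.real (cyl Λ S) = ∏ x ∈ Λ, weight ρ S x := by
  rw [Measure.real, cyl, hP.2, ENNReal.toReal_prod]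
  refine Finset.prod_congr rfl fun x _ => ?_
  by_cases h : x ∈ S
  · simp [ind, weight, h, hρ.1.le]
  · simp [ind, weight, h, hρ.2.le]

/-- A local function is a finite linear combination of indicators of cylinder events. -/
lemma local_eq_sum {d : ℕ} {G : Config d → ℝ} {Λ : Finset (Zd d)} (hG : localOn G Λ)
    (η : Config d) :
    G η = ∑ S ∈ Λ.powerset, (cyl Λ S).indicator (fun _ => G (ind S)) η := by
  rw [Finset.sum_eq_single (Λ.filter fun x => η x = true)]
  · have hm : η ∈ cyl Λ (Λ.filter fun x => η x = true) := by
      intro x hx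
      cases h : η x <;> simp [ind, hx, h]
    rw [Set.indicator_of_mem hm]
    exact hG _ _ hm
  · intro S hS hne
    refine Set.indicator_of_notMem (fun hm => hne ?_) _
    ext x
    simp only [Finset.mem_filter]
    constructor
    · intro hx
      have hxΛ := Finset.mem_powerset.1 hS hx
      exact ⟨hxΛ, by simpa [ind, hx] using hm x hxΛ⟩
    · rintro ⟨hx, hη⟩
      have := hm x hx
      rw [hη] at this
      simpa [ind] using this.symm
  · intro h
    exact absurd (Finset.mem_powerset.2 (Finset.filter_subset _ _)) h

lemma integrable_local {d : ℕ} {P : Measure (Config d)} [IsFiniteMeasure P]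
    {G : Config d → ℝ} {Λ : Finset (Zd d)} (hG : localOn G Λ) : Integrable G P := by
  rw [funext (local_eq_sum hG)]
  exact integrable_finsetSum _ fun S _ =>
    (integrable_const _).indicator (measurableSet_cyl Λ S)

lemma integral_local {d : ℕ} {ρ : ℝ} (hρ : ρ ∈ Set.Ioo (0 : ℝ) 1) {P : Measure (Config d)}
    (hP : IsBernoulliProduct ρ P) {G : Config d → ℝ} {Λ : Finset (Zd d)} (hG : localOn G Λ) :
    ∫ η, G η ∂P = ∑ S ∈ Λ.powerset, (∏ x ∈ Λ, weight ρ S x) * G (ind S) := by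
  have := hP.1
  rw [integral_congr_ae (Eventually.of_forall (local_eq_sum hG)), integral_finsetSum]
  · refine Finset.sum_congr rfl fun S _ => ?_
    rw [integral_indicator_const _ (measurableSet_cyl Λ S), measureReal_cyl hρ hP, smul_eq_mul]
  · exact fun S _ => (integrable_const _).indicator (measurableSet_cyl Λ S)

/-- Subsets of `Λ` correspond to pairs of a subset of `Y` and a subset of `Λ \ Y`. -/
lemma sum_powerset_split {d : ℕ} {Y Λ : Finset (Zd d)} (hY : Y ⊆ Λ) (f : Finset (Zd d) → ℝ) :
    ∑ S ∈ Λ.powerset, f S = ∑ T ∈ Y.powerset, ∑ U ∈ (Λ \ Y).powerset, f (T ∪ U) := by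
  rw [← Finset.sum_product']
  refine Finset.sum_nbij' (fun S => (S ∩ Y, S \ Y)) (fun p => p.1 ∪ p.2) ?_ ?_ ?_ ?_ ?_
  · intro S hS
    simp only [Finset.mem_product, Finset.mem_powerset] at hS ⊢
    exact ⟨Finset.inter_subset_right, Finset.sdiff_subset_sdiff hS le_rfl⟩
  · rintro ⟨T, U⟩ h
    simp only [Finset.mem_product, Finset.mem_powerset] at h ⊢
    exact Finset.union_subset (h.1.trans hY) (h.2.trans Finset.sdiff_subset)
  · intro S _
    ext x; simp; tauto
  · rintro ⟨T, U⟩ h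
    simp only [Finset.mem_product, Finset.mem_powerset, Finset.subset_iff, Finset.mem_sdiff] at h
    obtain ⟨h1, h2⟩ := h
    ext x
    · have := @h1 x; have := @h2 x
      simp; tauto
    · have := @h1 x; have := @h2 x
      simp; tauto
  · intro S _
    congr 1
    ext x; simp; tauto

lemma prod_sgn {d : ℕ} {Y T : Finset (Zd d)} (hT : T ⊆ Y) :
    ∏ x ∈ Y, sgn T x = (-1 : ℝ) ^ (Y.card - T.card) := by
  rw [← Finset.prod_sdiff hT, Finset.prod_congr rfl (g := fun _ => (-1 : ℝ)),
    Finset.prod_congr (s₁ := T) rfl (g := fun _ => (1 : ℝ))]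
  · simp [Finset.card_sdiff_of_subset hT]
  · intro x hx; simp [sgn, hx]
  · intro x hx; simp [sgn, (Finset.mem_sdiff.1 hx).2]

lemma local_setOn {d : ℕ} {F : Config d → ℝ} {Λ : Finset (Zd d)} (hF : localOn F Λ)
    (Y T : Finset (Zd d)) : localOn (fun η => F (setOn Y T η)) (Λ \ Y) := by
  intro η η' h
  refine hF _ _ fun x hx => ?_
  by_cases hY : x ∈ Y
  · simp [setOn, hY]
  · simpa [setOn, hY] using h x (Finset.mem_sdiff.2 ⟨hx, hY⟩)

/-- The expectation of `D_Y F` is the sum defining `E_ρ[F]` with the Bernoulli weights at the sites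
of `Y` replaced by signs. -/
lemma integral_glauber {d : ℕ} {ρ : ℝ} (hρ : ρ ∈ Set.Ioo (0 : ℝ) 1) {P : Measure (Config d)}
    (hP : IsBernoulliProduct ρ P) {F : Config d → ℝ} {Λ : Finset (Zd d)} (hF : localOn F Λ)
    {Y : Finset (Zd d)} (hY : Y ⊆ Λ) :
    ∫ η, glauber Y F η ∂P =
      ∑ S ∈ Λ.powerset, (∏ x ∈ Y, sgn S x) * (∏ x ∈ Λ \ Y, weight ρ S x) * F (ind S) := by
  have := hP.1
  unfold glauber
  rw [integral_finsetSum _ fun T _ => (integrable_local (local_setOn hF Y T)).const_mul _,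
    sum_powerset_split hY]
  refine Finset.sum_congr rfl fun T hT => ?_
  rw [Finset.mem_powerset] at hT
  rw [integral_const_mul, integral_local hρ hP (local_setOn hF Y T), Finset.mul_sum]
  refine Finset.sum_congr rfl fun U hU => ?_
  rw [Finset.mem_powerset] at hU
  -- As `T ⊆ Y` and `U` avoids `Y`, the set `T ∪ U` looks like `T` on `Y` and like `U` off `Y`.
  have hYU : ∀ x ∈ Y, x ∉ U := fun x hx hxU => (Finset.mem_sdiff.1 (hU hxU)).2 hx
  have h1 : ∏ x ∈ Y, sgn (T ∪ U) x = (-1 : ℝ) ^ (Y.card - T.card) := by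
    rw [← prod_sgn hT]
    exact Finset.prod_congr rfl fun x hx => by simp [sgn, hYU x hx]
  have h2 : ∏ x ∈ Λ \ Y, weight ρ (T ∪ U) x = ∏ x ∈ Λ \ Y, weight ρ U x := by
    refine Finset.prod_congr rfl fun x hx => ?_
    have : x ∉ T := fun h => (Finset.mem_sdiff.1 hx).2 (hT h)
    simp [weight, this]
  have h3 : setOn Y T (ind U) = ind (T ∪ U) := by
    funext x
    by_cases hx : x ∈ Y
    · simp [setOn, ind, hx, hYU x hx]
    · have : x ∉ T := fun h => hx (hT h)
      simp [setOn, ind, hx, this]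
  rw [h1, h2, h3, mul_assoc]

/-- The Taylor expansion of `r ↦ E_r[F]` around `ρ`. -/
lemma integral_expansion {d : ℕ} {r ρ : ℝ} (hr : r ∈ Set.Ioo (0 : ℝ) 1)
    (hρ : ρ ∈ Set.Ioo (0 : ℝ) 1) {Pr Pρ : Measure (Config d)}
    (hPr : IsBernoulliProduct r Pr) (hPρ : IsBernoulliProduct ρ Pρ)
    {F : Config d → ℝ} {Λ : Finset (Zd d)} (hF : localOn F Λ) :
    ∫ η, F η ∂Pr =
      ∑ Y ∈ Λ.powerset, (∫ η, glauber Y F η ∂Pρ) * (r - ρ) ^ Y.card := by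
  have hw : ∀ (S : Finset (Zd d)) x, weight r S x = (r - ρ) * sgn S x + weight ρ S x := by
    intro S x
    unfold weight sgn
    split_ifs <;> ring
  have hR : ∀ Y ∈ Λ.powerset, (∫ η, glauber Y F η ∂Pρ) * (r - ρ) ^ Y.card =
      ∑ S ∈ Λ.powerset, (∏ x ∈ Y, sgn S x) * (∏ x ∈ Λ \ Y, weight ρ S x) * F (ind S) *
        (r - ρ) ^ Y.card := fun Y hY => by
    rw [integral_glauber hρ hPρ hF (Finset.mem_powerset.1 hY), Finset.sum_mul]
  rw [integral_local hr hPr hF, Finset.sum_congr rfl hR, Finset.sum_comm]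
  refine Finset.sum_congr rfl fun S _ => ?_
  simp_rw [hw]
  rw [Finset.prod_add, Finset.sum_mul]
  refine Finset.sum_congr rfl fun Y _ => ?_
  rw [Finset.prod_mul_distrib, Finset.prod_const]
  ring

/-- `D_Y F` vanishes if `F` does not depend on some coordinate `x ∈ Y`: the terms indexed by `T`
and `T ∪ {x}` cancel. -/
lemma glauber_eq_zero {d : ℕ} {F : Config d → ℝ} {Λ : Finset (Zd d)} (hF : localOn F Λ)
    {Y : Finset (Zd d)} (hY : ¬ Y ⊆ Λ) : glauber Y F = 0 := by
  obtain ⟨x, hxY, hxΛ⟩ := Finset.not_subset.1 hY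
  funext η
  unfold glauber
  have hins : Y.powerset = (insert x (Y.erase x)).powerset := by rw [Finset.insert_erase hxY]
  rw [hins, Finset.sum_powerset_insert (Finset.notMem_erase x Y), ← Finset.sum_add_distrib]
  refine Finset.sum_eq_zero fun T hT => ?_
  rw [Finset.mem_powerset] at hT
  have hxT : x ∉ T := fun h => Finset.notMem_erase x Y (hT h)
  have hF' : F (setOn Y (insert x T) η) = F (setOn Y T η) := by
    refine hF _ _ fun z hz => ?_
    have : z ≠ x := fun h => hxΛ (h ▸ hz)
    simp [setOn, this]
  have hc : T.card < Y.card := by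
    have h1 := Finset.card_le_card hT
    have h2 := Finset.card_erase_lt_of_mem hxY
    omega
  rw [hF', Finset.card_insert_of_notMem hxT,
    show Y.card - T.card = (Y.card - (T.card + 1)) + 1 by omega, pow_succ]
  ring

lemma iteratedDeriv_sub_pow_self (n k : ℕ) (ρ : ℝ) :
    iteratedDeriv n (fun r : ℝ => (r - ρ) ^ k) ρ = if n = k then (n.factorial : ℝ) else 0 := by
  rw [iteratedDeriv_comp_sub_const (f := fun z : ℝ => z ^ k)]
  simp only [sub_self, iteratedDeriv_fun_pow_zero]
  split_ifs with h <;> simp [h]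

/-- perturbation formula. If `F : X → ℝ` is bounded and measurable with
respect to the coordinates in `Λ_L`, and `P r` denotes the product Bernoulli(r) measure,
then `r ↦ E_r[F]` is infinitely differentiable on `(0,1)` with
`(d^n/dρ^n) E_ρ[F] = n! ∑_{Y ∈ K_n} E_ρ[D_Y F]`; moreover `D_Y F = 0` whenever
`Y ⊄ Λ_L`, so the sum has only finitely many nonzero terms. -/
theorem stmt7 (d L : ℕ) (P : ℝ → Measure (Config d))
    (hP : ∀ r ∈ Set.Ioo (0 : ℝ) 1, IsBernoulliProduct r (P r))
    (F : Config d → ℝ) (hFm : Measurable F) (hFb : ∃ M : ℝ, ∀ η, |F η| ≤ M)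
    (hFloc : localOn F (box d L)) :
    ContDiffOn ℝ (⊤ : ℕ∞) (fun r => ∫ η, F η ∂(P r)) (Set.Ioo 0 1) ∧
    (∀ (n : ℕ) (Y : Kn d n), ¬ (Y : Finset (Zd d)) ⊆ box d L →
        glauber (Y : Finset (Zd d)) F = 0) ∧
    ∀ n : ℕ, 1 ≤ n → ∀ ρ ∈ Set.Ioo (0 : ℝ) 1,
      iteratedDerivWithin n (fun r => ∫ η, F η ∂(P r)) (Set.Ioo 0 1) ρ
        = (n.factorial : ℝ) *
            ∑' Y : Kn d n, ∫ η, glauber (Y : Finset (Zd d)) F η ∂(P ρ) := by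
  have hexp : ∀ ρ ∈ Set.Ioo (0 : ℝ) 1, Set.EqOn (fun r => ∫ η, F η ∂(P r))
      (fun r => ∑ Y ∈ (box d L).powerset, (∫ η, glauber Y F η ∂(P ρ)) * (r - ρ) ^ Y.card)
      (Set.Ioo 0 1) := fun ρ hρ r hr => integral_expansion hr hρ (hP r hr) (hP ρ hρ) hFloc
  refine ⟨?_, fun n Y hY => glauber_eq_zero hFloc hY, fun n _ ρ hρ => ?_⟩
  · -- The expansion around any one point, here `1/2`, exhibits a polynomial.
    refine ContDiffOn.congr ?_ (hexp (1 / 2) (by norm_num))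
    exact ContDiff.contDiffOn (by fun_prop)
  · rw [iteratedDerivWithin_congr (hexp ρ hρ) hρ, iteratedDerivWithin_of_isOpen isOpen_Ioo hρ,
      iteratedDeriv_fun_sum fun Y _ => ContDiff.contDiffAt (by fun_prop)]
    simp only [iteratedDeriv_const_mul_field, iteratedDeriv_sub_pow_self]
    have htsum : ∑' Y : Kn d n, ∫ η, glauber (Y : Finset (Zd d)) F η ∂(P ρ) =
        ∑ Y ∈ (box d L).powerset, if n = Y.card then ∫ η, glauber Y F η ∂(P ρ) else 0 := by
      refine (tsum_subtype {Y : Finset (Zd d) | Y.card = n}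
        (fun Y => ∫ η, glauber Y F η ∂(P ρ))).trans ?_
      rw [tsum_eq_sum (s := (box d L).powerset)]
      · refine Finset.sum_congr rfl fun Y _ => ?_
        simp [Set.indicator_apply, eq_comm]
      · intro Y hY
        rw [Finset.mem_powerset] at hY
        simp [Set.indicator_apply, glauber_eq_zero hFloc hY]
    rw [htsum, Finset.mul_sum]
    refine Finset.sum_congr rfl fun Y _ => ?_
    split_ifs <;> ring

end
end

section
/- Generalized Nash inequality: for every n ≥ 1 and d ≥ 1 there exists a constant C < ∞ depending only on n and d such that for every ρ ∈ (0,1) and every f ∈ ℓ¹(K_n), the function F := I_n(f) satisfies E_ρ[F²] ≤ C · χ(ρ)^{n(1−α_n)} · Ē_ρ(F)^{α_n} · |||F|||_n^{2(1−α_n)}, where α_n := nd/(2+nd) and Ē_ρ(F) := ½ Σ_{b∈(Z^d)^*} E_ρ[(π_b F)²] is the Dirichlet form of the simple symmetric exclusion process. -/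
/-!
The inequality follows from a Nash inequality for functions on `K_n`, seen as the state space
of `n` exclusion particles, with the dimension `D = nd` of the space of labelled particles.

*Reduction to the coefficients.* The `η̄_Y` are orthogonal in `L²(P_ρ)` with
`E_ρ[η̄_Y²] = χ(ρ)^{|Y|}` (`integral_chaosAll_sq`), and exchanging `x` and `y` turns `I_n(f)` into
`I_n(f ∘ σ)`, `σ` being the transposition of `x` and `y` (`kawasaki_chaosAll`). Hence
`E_ρ[F²] = χ^n ‖f‖₂²` and `∑_b E_ρ[(π_b F)²] = χ^n E`, with
`E = ∑_b ‖f ∘ σ_b - f‖₂²`. Since the powers of `χ` match, it remains to bound `‖f‖₂²` by a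
constant times `E^α ‖f‖₁^{2(1-α)}`. The energy `E` is finite because an `n`-point set meets at
most `2nd` bonds (`energy_le`).

*Long-range exchanges.* Write `N(h) = ∑_x ‖f ∘ σ_{x,x+h} - f‖₂²`. If `e` is a unit
step, then `σ_{x,x+e+h}` is the conjugate of `σ_{x+e,x+e+h}` by the bond exchange `σ_{x,x+e}`, so
the square root of `N` grows by at most `2 √E` at each step, and `N(h) ≤ (2|h|₁ + 1)² E` (`swapEnergy_le`). Sites that
happen to be occupied on the way play no role, as the argument uses transpositions only.

*Comparison with an average.* Label the particles, and displace them one after the other by a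
vector `h` in `Λ^n`, where `Λ` is the box of size `L`. If the targets avoid each other and the
starting points, each move is one exchange, whence the bound `tsum_shift_le` of order `L² E`. As
soon as `|Λ| ≥ 4n²`, at least half of the displacements have this property
(`card_noCollision_ge`). Summing `a² ≤ 2ab + (b - a)²` with `a = f(w)`, `b = f(w + h)` over the
labelled configurations `w` and the admissible `h` gives
`‖f‖₂² ≤ K (L^{-nd} ‖f‖₁² + L² E)` (`nash_scale`, `nash_scale_real`); for small `L` this
is just `‖f‖₂ ≤ ‖f‖₁`. Optimizing over `L` (`optimize`) concludes.
-/

open MeasureTheory Filter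
open scoped ENNReal NNReal

noncomputable section

/-! ### Second moments under the product Bernoulli measure -/

lemma measurable_etaBar {d : ℕ} (ρ : ℝ) (Y : Finset (Zd d)) :
    Measurable (etaBar ρ Y : Config d → ℝ) := by
  unfold etaBar
  refine Finset.measurable_prod _ fun x _ => ?_
  exact (measurable_of_finite (fun b : Bool => (if b then (1 : ℝ) else 0) - ρ)).comp
    (measurable_pi_apply x)

lemma abs_etaBar_le {d : ℕ} {ρ : ℝ} (hρ : ρ ∈ Set.Ioo (0 : ℝ) 1) (Y : Finset (Zd d))
    (η : Config d) : |etaBar ρ Y η| ≤ 1 := by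
  unfold etaBar
  rw [Finset.abs_prod]
  refine Finset.prod_le_one (fun _ _ => abs_nonneg _) fun x _ => ?_
  have h0 := hρ.1
  have h1 := hρ.2
  rw [abs_le]
  split_ifs <;> constructor <;> linarith

/-- Functions of distinct coordinates are independent under `P`, each coordinate being
Bernoulli(ρ). -/
lemma integral_prod_coord {d : ℕ} {ρ : ℝ} (hρ : ρ ∈ Set.Ioo (0 : ℝ) 1)
    {P : Measure (Config d)} (hP : IsBernoulliProduct ρ P) (S : Finset (Zd d))
    (u : Zd d → Bool → ℝ) :
    ∫ η, ∏ x ∈ S, u x (η x) ∂P = ∏ x ∈ S, (ρ * u x true + (1 - ρ) * u x false) := by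
  classical
  obtain ⟨hprob, hcyl⟩ := hP
  rw [Finset.prod_add]
  -- the value of the product on the cylinder `{η = 1 on T, η = 0 on S ∖ T}`
  let c : Finset (Zd d) → ℝ := fun T => (∏ x ∈ T, u x true) * ∏ x ∈ S \ T, u x false
  let A : Finset (Zd d) → Set (Config d) := fun T => {η | ∀ x ∈ S, η x = decide (x ∈ T)}
  have hA : ∀ T, MeasurableSet (A T) := by
    intro T
    have : A T = ⋂ x ∈ S, (fun η : Config d => η x) ⁻¹' {decide (x ∈ T)} := by
      ext η; simp [A]
    rw [this]
    exact Finset.measurableSet_biInter _ fun x _ =>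
      (measurable_pi_apply x) (measurableSet_singleton _)
  have hpt : ∀ η : Config d, ∏ x ∈ S, u x (η x)
      = ∑ T ∈ S.powerset, (A T).indicator (fun _ => c T) η := by
    intro η
    rw [Finset.sum_eq_single (S.filter fun x => η x = true)]
    · rw [Set.indicator_of_mem]
      · rw [← Finset.prod_filter_mul_prod_filter_not S (fun x => η x = true)]
        simp only [c]
        congr 1
        · exact Finset.prod_congr rfl fun x hx => by rw [(Finset.mem_filter.mp hx).2]
        · rw [← Finset.filter_not]
          refine Finset.prod_congr rfl fun x hx => ?_
          have := (Finset.mem_filter.mp hx).2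
          simp only [Bool.not_eq_true] at this
          rw [this]
      · intro x hx
        by_cases h : η x = true <;> simp [hx, h]
    · intro T hT hne
      rw [Set.indicator_of_notMem]
      intro hmem
      apply hne
      ext x
      have hTS := Finset.mem_powerset.mp hT
      simp only [Finset.mem_filter]
      constructor
      · intro hx
        exact ⟨hTS hx, by simpa [hx] using hmem x (hTS hx)⟩
      · rintro ⟨hx, h⟩
        have := hmem x hx
        rw [h] at this
        simpa using this.symm
    · intro h
      exact absurd (Finset.mem_powerset.mpr (Finset.filter_subset _ _)) h
  simp_rw [hpt]
  rw [integral_finsetSum _ fun T _ => (integrable_const (c T)).indicator (hA T)]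
  refine Finset.sum_congr rfl fun T hT => ?_
  rw [integral_indicator (hA T), setIntegral_const, smul_eq_mul]
  have hTS := Finset.mem_powerset.mp hT
  have hr : P.real (A T) = (∏ x ∈ T, ρ) * ∏ x ∈ S \ T, (1 - ρ) := by
    rw [Measure.real, hcyl S fun x => decide (x ∈ T), ENNReal.toReal_prod]
    rw [← Finset.prod_sdiff hTS, mul_comm]
    congr 1
    · refine Finset.prod_congr rfl fun x hx => ?_
      rw [ENNReal.toReal_ofReal]
      · simp [hx]
      · simp [hx, hρ.1.le]
    · refine Finset.prod_congr rfl fun x hx => ?_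
      have := (Finset.mem_sdiff.mp hx).2
      rw [ENNReal.toReal_ofReal]
      · simp [this]
      · simp [this, hρ.2.le]
  rw [hr, Finset.prod_mul_distrib, Finset.prod_mul_distrib]
  simp only [c]
  ring

lemma integral_etaBar_mul {d : ℕ} {ρ : ℝ} (hρ : ρ ∈ Set.Ioo (0 : ℝ) 1)
    {P : Measure (Config d)} (hP : IsBernoulliProduct ρ P) (Y Z : Finset (Zd d)) :
    ∫ η, etaBar ρ Y η * etaBar ρ Z η ∂P = if Z = Y then (ρ * (1 - ρ)) ^ Y.card else 0 := by
  classical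
  let v : Bool → ℝ := fun b => (if b then (1 : ℝ) else 0) - ρ
  let u : Zd d → Bool → ℝ := fun x b =>
    (if x ∈ Y then v b else 1) * (if x ∈ Z then v b else 1)
  have hpt : ∀ η : Config d, etaBar ρ Y η * etaBar ρ Z η = ∏ x ∈ Y ∪ Z, u x (η x) := by
    intro η
    simp only [u]
    rw [Finset.prod_mul_distrib, Finset.prod_ite_mem, Finset.prod_ite_mem]
    rw [Finset.inter_eq_right.mpr Finset.subset_union_left,
      Finset.inter_eq_right.mpr Finset.subset_union_right]
    rfl
  simp_rw [hpt]
  rw [integral_prod_coord hρ hP]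
  split_ifs with h
  · subst h
    rw [Finset.union_self, ← Finset.prod_const]
    refine Finset.prod_congr rfl fun x hx => ?_
    simp only [u, v, hx, if_true]
    simp
    ring
  · have : ∃ x, (x ∈ Y ∧ x ∉ Z) ∨ (x ∉ Y ∧ x ∈ Z) := by
      by_contra hcon
      push Not at hcon
      apply h
      ext x
      have := hcon x
      tauto
    obtain ⟨x, hx⟩ := this
    refine Finset.prod_eq_zero (i := x) ?_ ?_
    · rw [Finset.mem_union]; tauto
    · rcases hx with ⟨h1, h2⟩ | ⟨h1, h2⟩ <;> · simp [u, v, h1, h2]; ring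

/-- The sum `∑_Y φ(Y) η̄_Y` over all finite subsets `Y` of `ℤ^d`, for an absolutely summable
`φ`. -/
def chaosAll {d : ℕ} (ρ : ℝ) (φ : Finset (Zd d) → ℝ) (η : Config d) : ℝ :=
  ∑' Y, φ Y * etaBar ρ Y η

lemma norm_mul_etaBar_le {d : ℕ} {ρ : ℝ} (hρ : ρ ∈ Set.Ioo (0 : ℝ) 1)
    (φ : Finset (Zd d) → ℝ) (Y : Finset (Zd d)) (η : Config d) :
    ‖φ Y * etaBar ρ Y η‖ ≤ |φ Y| := by
  rw [Real.norm_eq_abs, abs_mul]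
  exact mul_le_of_le_one_right (abs_nonneg _) (abs_etaBar_le hρ Y η)

lemma summable_chaosAll {d : ℕ} {ρ : ℝ} (hρ : ρ ∈ Set.Ioo (0 : ℝ) 1)
    {φ : Finset (Zd d) → ℝ} (hφ : Summable fun Y => |φ Y|) (η : Config d) :
    Summable fun Y => φ Y * etaBar ρ Y η :=
  Summable.of_norm_bounded hφ fun Y => norm_mul_etaBar_le hρ φ Y η

/-- A chaos series with `ℓ¹` coefficients may be integrated term by term against a bounded
function. -/
lemma integral_chaosAll_mul {d : ℕ} {ρ : ℝ} (hρ : ρ ∈ Set.Ioo (0 : ℝ) 1)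
    {P : Measure (Config d)} [IsProbabilityMeasure P]
    {φ : Finset (Zd d) → ℝ} (hφ : Summable fun Y => |φ Y|) {G : Config d → ℝ} {B : ℝ}
    (hG : Measurable G) (hB : ∀ η, |G η| ≤ B) :
    ∫ η, chaosAll ρ φ η * G η ∂P = ∑' Y, φ Y * ∫ η, etaBar ρ Y η * G η ∂P := by
  have hle : ∀ Y η, ‖φ Y * etaBar ρ Y η * G η‖ ≤ |φ Y| * B := by
    intro Y η
    rw [norm_mul]
    exact mul_le_mul (norm_mul_etaBar_le hρ φ Y η) (hB η) (norm_nonneg _) (abs_nonneg _)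
  have hint : ∀ Y, Integrable (fun η => φ Y * etaBar ρ Y η * G η) P := fun Y =>
    Integrable.of_bound (((measurable_etaBar ρ Y).const_mul _).mul hG).aestronglyMeasurable
      (|φ Y| * B) (Eventually.of_forall (hle Y))
  have hsum : Summable fun Y => ∫ η, ‖φ Y * etaBar ρ Y η * G η‖ ∂P := by
    refine Summable.of_nonneg_of_le (fun Y => integral_nonneg fun _ => norm_nonneg _)
      (fun Y => ?_) (hφ.mul_right B)
    calc ∫ η, ‖φ Y * etaBar ρ Y η * G η‖ ∂P ≤ ∫ _, |φ Y| * B ∂P :=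
          integral_mono (hint Y).norm (integrable_const _) (hle Y)
      _ = |φ Y| * B := by simp
  have := integral_tsum_of_summable_integral_norm hint hsum
  simp_rw [chaosAll, ← tsum_mul_right, ← this]
  refine tsum_congr fun Y => ?_
  rw [← integral_const_mul]
  simp_rw [mul_assoc]

lemma measurable_chaosAll {d : ℕ} {ρ : ℝ} (φ : Finset (Zd d) → ℝ) :
    Measurable (chaosAll ρ φ : Config d → ℝ) := by
  unfold chaosAll
  exact Measurable.tsum fun Y => (measurable_etaBar ρ Y).const_mul _

lemma abs_chaosAll_le {d : ℕ} {ρ : ℝ} (hρ : ρ ∈ Set.Ioo (0 : ℝ) 1)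
    {φ : Finset (Zd d) → ℝ} (hφ : Summable fun Y => |φ Y|) (η : Config d) :
    |chaosAll ρ φ η| ≤ ∑' Y, |φ Y| :=
  tsum_of_norm_bounded hφ.hasSum fun Y => norm_mul_etaBar_le hρ φ Y η

/-- The chaos expansion is orthogonal, with `E_ρ[η̄_Y²] = χ(ρ)^{|Y|}`. -/
lemma integral_chaosAll_sq {d : ℕ} {ρ : ℝ} (hρ : ρ ∈ Set.Ioo (0 : ℝ) 1)
    {P : Measure (Config d)} (hP : IsBernoulliProduct ρ P)
    {φ : Finset (Zd d) → ℝ} (hφ : Summable fun Y => |φ Y|) :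
    ∫ η, chaosAll ρ φ η ^ 2 ∂P = ∑' Y, (φ Y) ^ 2 * (ρ * (1 - ρ)) ^ Y.card := by
  have := hP.1
  simp_rw [pow_two (chaosAll ρ φ _)]
  rw [integral_chaosAll_mul hρ hφ (measurable_chaosAll φ) (abs_chaosAll_le hρ hφ)]
  refine tsum_congr fun Y => ?_
  have h1 : ∫ η, etaBar ρ Y η * chaosAll ρ φ η ∂P = φ Y * (ρ * (1 - ρ)) ^ Y.card := by
    simp_rw [mul_comm (etaBar ρ Y _)]
    rw [integral_chaosAll_mul hρ hφ (measurable_etaBar ρ Y) (abs_etaBar_le hρ Y),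
      tsum_eq_single Y]
    · rw [integral_etaBar_mul hρ hP]; simp
    · intro Z hZ
      rw [integral_etaBar_mul hρ hP]; simp [hZ.symm]
  rw [h1]; ring

/-! ### Energy of long-range exchanges -/

/-- The action of a permutation of the sites on finite subsets of `ℤ^d`. -/
def act {d : ℕ} (σ : Equiv.Perm (Zd d)) : Finset (Zd d) ≃ Finset (Zd d) :=
  Equiv.finsetCongr σ

lemma act_mul {d : ℕ} (σ τ : Equiv.Perm (Zd d)) (Y : Finset (Zd d)) :
    act (σ * τ) Y = act σ (act τ Y) := by
  simp only [act, Equiv.finsetCongr_apply, Finset.map_map]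
  rfl

/-- The square of a real number, as an extended nonnegative real. -/
def esq (a : ℝ) : ℝ≥0∞ := ENNReal.ofReal (a ^ 2)

/-- The energy `‖φ ∘ σ - φ‖²` in `ℓ²` of a single permutation. -/
def permEnergy {d : ℕ} (φ : Finset (Zd d) → ℝ) (σ : Equiv.Perm (Zd d)) : ℝ≥0∞ :=
  ∑' Y, esq (φ (act σ Y) - φ Y)

/-- The total energy of the exchanges `(x, x + h)`, over all `x ∈ ℤ^d`. -/
def swapEnergy {d : ℕ} (φ : Finset (Zd d) → ℝ) (h : Zd d) : ℝ≥0∞ :=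
  ∑' x : Zd d, permEnergy φ (Equiv.swap x (x + h))

/-- The nearest-neighbor energy of the coefficients: `2 χ(ρ)^{-n}` times the Dirichlet form of
`I_n(φ)` when `φ` lives on `K_n`. -/
def energy {d : ℕ} (φ : Finset (Zd d) → ℝ) : ℝ≥0∞ :=
  ∑' p : Zd d × Fin d, permEnergy φ (Equiv.swap p.1 (p.1 + stdBasis d p.2))

lemma swapEnergy_basis_le {d : ℕ} (φ : Finset (Zd d) → ℝ) (i : Fin d) :
    swapEnergy φ (stdBasis d i) ≤ energy φ := by
  unfold energy swapEnergy
  rw [ENNReal.tsum_prod (f := fun x j => permEnergy φ (Equiv.swap x (x + stdBasis d j)))]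
  exact ENNReal.tsum_le_tsum fun x =>
    ENNReal.le_tsum (f := fun j => permEnergy φ (Equiv.swap x (x + stdBasis d j))) i

lemma swapEnergy_zero {d : ℕ} (φ : Finset (Zd d) → ℝ) : swapEnergy φ 0 = 0 := by
  simp [swapEnergy, permEnergy, act, esq]

lemma swapEnergy_shift {d : ℕ} (φ : Finset (Zd d) → ℝ) (e h : Zd d) :
    ∑' x : Zd d, permEnergy φ (Equiv.swap (x + e) (x + e + h)) = swapEnergy φ h :=
  (Equiv.addRight e).tsum_eq fun x => permEnergy φ (Equiv.swap x (x + h))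

lemma swapEnergy_neg {d : ℕ} (φ : Finset (Zd d) → ℝ) (h : Zd d) :
    swapEnergy φ (-h) = swapEnergy φ h := by
  rw [← swapEnergy_shift φ (-h) h]
  unfold swapEnergy
  refine tsum_congr fun x => ?_
  rw [Equiv.swap_comm, neg_add_cancel_right]

lemma esq_three (b : ℕ) (p q r : ℝ) :
    (b : ℝ≥0∞) * esq (p + q + r) ≤ (b + 2) * (b * esq p + esq q + b * esq r) := by
  unfold esq
  have hb : (0 : ℝ) ≤ b := Nat.cast_nonneg b
  have e : ∀ a : ℝ, (b : ℝ≥0∞) * ENNReal.ofReal a = ENNReal.ofReal (b * a) := fun a => by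
    rw [ENNReal.ofReal_mul hb, ENNReal.ofReal_natCast]
  have e2 : ((b : ℝ≥0∞) + 2) = ENNReal.ofReal (b + 2) := by
    rw [ENNReal.ofReal_add hb (by norm_num)]; simp
  rw [e, e, e, e2, ← ENNReal.ofReal_add (by positivity) (by positivity),
    ← ENNReal.ofReal_add (by positivity) (by positivity), ← ENNReal.ofReal_mul (by positivity)]
  refine ENNReal.ofReal_le_ofReal ?_
  nlinarith [sq_nonneg (b * p - q), sq_nonneg (b * r - q), mul_nonneg hb (sq_nonneg (p - r))]

/-- The exchange of `u` and `w` is the conjugate of the exchange of `v` and `w` by that of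
`u` and `v`, so its energy is controlled by those of the factors. -/
lemma permEnergy_conj {d : ℕ} (φ : Finset (Zd d) → ℝ) (b : ℕ) {u v w : Zd d}
    (h1 : w ≠ v) (h2 : w ≠ u) :
    (b : ℝ≥0∞) * permEnergy φ (Equiv.swap u w)
      ≤ (b + 2) * (b * permEnergy φ (Equiv.swap u v) + permEnergy φ (Equiv.swap v w)
          + b * permEnergy φ (Equiv.swap u v)) := by
  set s := Equiv.swap u v with hs
  set t := Equiv.swap v w with ht
  have hst : Equiv.swap u w = s * (t * s) := by
    rw [hs, ht, Equiv.swap_comm u v, Equiv.swap_comm v w, ← mul_assoc,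
      Equiv.swap_mul_swap_mul_swap h1 h2]
  have hp : ∑' Y, esq (φ (act s (act (t * s) Y)) - φ (act (t * s) Y)) = permEnergy φ s :=
    (act (t * s)).tsum_eq fun Y => esq (φ (act s Y) - φ Y)
  have hq : ∑' Y, esq (φ (act t (act s Y)) - φ (act s Y)) = permEnergy φ t :=
    (act s).tsum_eq fun Y => esq (φ (act t Y) - φ Y)
  rw [← hq]
  nth_rewrite 2 [← hp]
  unfold permEnergy
  simp_rw [← ENNReal.tsum_mul_left, ← ENNReal.tsum_add, ← ENNReal.tsum_mul_left]
  refine ENNReal.tsum_le_tsum fun Y => ?_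
  refine le_trans (le_of_eq ?_) (esq_three b _ _ _)
  rw [hst, act_mul, act_mul]
  congr 2
  ring

lemma swapEnergy_add {d : ℕ} (φ : Finset (Zd d) → ℝ) {E : ℝ≥0∞} {e h : Zd d} {b : ℕ}
    (hb : 1 ≤ b) (he : swapEnergy φ e ≤ E) (hh : swapEnergy φ h ≤ (b : ℝ≥0∞) ^ 2 * E) :
    swapEnergy φ (e + h) ≤ ((b + 2 : ℕ) : ℝ≥0∞) ^ 2 * E := by
  by_cases h0 : h = 0
  · subst h0
    rw [add_zero]
    refine he.trans (le_mul_of_one_le_left zero_le ?_)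
    exact_mod_cast Nat.one_le_pow _ _ (by omega)
  by_cases h1 : e + h = 0
  · rw [h1, swapEnergy_zero]; exact zero_le
  have key : (b : ℝ≥0∞) * swapEnergy φ (e + h)
      ≤ (b + 2) * (b * swapEnergy φ e + swapEnergy φ h + b * swapEnergy φ e) := by
    rw [← swapEnergy_shift φ e h]
    unfold swapEnergy
    simp_rw [← ENNReal.tsum_mul_left, ← ENNReal.tsum_add, ← ENNReal.tsum_mul_left]
    refine ENNReal.tsum_le_tsum fun x => ?_
    rw [← add_assoc]
    refine permEnergy_conj φ b ?_ ?_
    · simpa using h0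
    · rw [add_assoc]; simpa using h1
  have hb0 : (b : ℝ≥0∞) ≠ 0 := by exact_mod_cast (by omega : b ≠ 0)
  refine (ENNReal.mul_le_mul_iff_right hb0 (ENNReal.natCast_ne_top b)).mp (key.trans ?_)
  calc ((b : ℝ≥0∞) + 2) * (b * swapEnergy φ e + swapEnergy φ h + b * swapEnergy φ e)
      ≤ (b + 2) * (b * E + b ^ 2 * E + b * E) := by gcongr
    _ = b * (((b + 2 : ℕ) : ℝ≥0∞) ^ 2 * E) := by push_cast; ring

/-- Exchanging sites at distance `ℓ` costs at most of order `ℓ²` times the nearest-neighbor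
energy. -/
lemma swapEnergy_le {d : ℕ} (φ : Finset (Zd d) → ℝ) (m : ℕ) :
    ∀ h : Zd d, ∑ i, (h i).natAbs = m →
      swapEnergy φ h ≤ ((2 * m + 1 : ℕ) : ℝ≥0∞) ^ 2 * energy φ := by
  induction m with
  | zero =>
    intro h hm
    have : h = 0 := by
      ext i
      have := (Finset.sum_eq_zero_iff.mp hm) i (Finset.mem_univ i)
      simpa using this
    rw [this, swapEnergy_zero]
    exact zero_le
  | succ m ih =>
    intro h hm
    obtain ⟨i, hi⟩ : ∃ i, h i ≠ 0 := by
      by_contra hcon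
      push Not at hcon
      simp [hcon] at hm
    -- peel off one unit step `s • e_i` in the direction of a nonzero coordinate
    have main : ∀ s : ℤ, (h i - s).natAbs + 1 = (h i).natAbs →
        swapEnergy φ (s • stdBasis d i) ≤ energy φ →
        swapEnergy φ h ≤ ((2 * (m + 1) + 1 : ℕ) : ℝ≥0∞) ^ 2 * energy φ := by
      intro s hs hE
      have hsum : ∑ j, ((h - s • stdBasis d i) j).natAbs = m := by
        rw [← Finset.add_sum_erase _ _ (Finset.mem_univ i)] at hm ⊢
        have : ∑ j ∈ Finset.univ.erase i, ((h - s • stdBasis d i) j).natAbs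
            = ∑ j ∈ Finset.univ.erase i, (h j).natAbs := by
          refine Finset.sum_congr rfl fun j hj => ?_
          simp [stdBasis, Finset.ne_of_mem_erase hj]
        rw [this]
        have : (h - s • stdBasis d i) i = h i - s := by simp [stdBasis]
        rw [this]
        omega
      have := swapEnergy_add φ (by omega) hE (ih _ hsum)
      rwa [add_sub_cancel] at this
    rcases lt_or_gt_of_ne hi with hneg | hpos
    · refine main (-1) (by omega) ?_
      rw [neg_one_zsmul, swapEnergy_neg]
      exact swapEnergy_basis_le φ i
    · refine main 1 (by omega) ?_
      rw [one_zsmul]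
      exact swapEnergy_basis_le φ i

lemma swapEnergy_box_le {d : ℕ} (φ : Finset (Zd d) → ℝ) {L : ℕ} {h : Zd d} (hh : h ∈ box d L) :
    swapEnergy φ h ≤ ((2 * (d * L) + 1 : ℕ) : ℝ≥0∞) ^ 2 * energy φ := by
  refine (swapEnergy_le φ _ h rfl).trans ?_
  have : ∑ i, (h i).natAbs ≤ d * L := by
    calc ∑ i, (h i).natAbs ≤ ∑ _i : Fin d, L := by
          refine Finset.sum_le_sum fun i _ => ?_
          have := Fintype.mem_piFinset.mp hh i
          rw [Finset.mem_Icc] at this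
          omega
      _ = d * L := by simp
  gcongr

/-! ### Labelled particles -/

/-- The set of sites occupied by a tuple of labelled particles. -/
def pts {d n : ℕ} (w : Fin n → Zd d) : Finset (Zd d) := Finset.univ.image w

lemma card_pts_iff {d n : ℕ} (w : Fin n → Zd d) :
    (pts w).card = n ↔ Function.Injective w := by
  have := Finset.card_image_iff (s := (Finset.univ : Finset (Fin n))) (f := w)
  rw [Finset.card_univ, Fintype.card_fin] at this
  rw [pts, this, Finset.coe_univ, Set.injOn_univ]

lemma tsum_pts {d n : ℕ} (G : Finset (Zd d) → ℝ≥0∞) :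
    ∑' w : Fin n → Zd d, G (pts w) = ∑' Y, ∑' w : Fin n → Zd d, if pts w = Y then G Y else 0 := by
  rw [ENNReal.tsum_comm]
  refine tsum_congr fun w => ?_
  rw [tsum_eq_single (pts w)]
  · simp
  · intro Y hY; simp [hY.symm]

/-- Each `n`-point set carries at most `n^n` labellings. -/
lemma tsum_pts_le {d n : ℕ} (G : Finset (Zd d) → ℝ≥0∞) (hG : ∀ Y, Y.card ≠ n → G Y = 0) :
    ∑' w : Fin n → Zd d, G (pts w) ≤ (n : ℝ≥0∞) ^ n * ∑' Y, G Y := by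
  rw [tsum_pts, ← ENNReal.tsum_mul_left]
  refine ENNReal.tsum_le_tsum fun Y => ?_
  by_cases hY : Y.card = n
  · rw [tsum_eq_sum (s := Fintype.piFinset fun _ : Fin n => Y)]
    · refine (Finset.sum_le_card_nsmul _ _ (G Y) fun w _ => ?_).trans (le_of_eq ?_)
      · split_ifs
        · exact le_rfl
        · exact zero_le
      · rw [Fintype.card_piFinset]; simp [hY]
    · intro w hw
      rw [if_neg]
      rintro rfl
      exact hw (Fintype.mem_piFinset.mpr fun i =>
        Finset.mem_image_of_mem w (Finset.mem_univ i))
  · simp [hG Y hY]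

/-- Each `n`-point set carries at least one labelling. -/
lemma le_tsum_pts {d n : ℕ} (G : Finset (Zd d) → ℝ≥0∞) (hG : ∀ Y, Y.card ≠ n → G Y = 0) :
    ∑' Y, G Y ≤ ∑' w : Fin n → Zd d, G (pts w) := by
  rw [tsum_pts]
  refine ENNReal.tsum_le_tsum fun Y => ?_
  by_cases hY : Y.card = n
  · let w : Fin n → Zd d := fun i => (Y.equivFin.symm (Fin.cast hY.symm i) : Zd d)
    have hw : pts w = Y := by
      ext x
      simp only [pts, Finset.mem_image, Finset.mem_univ, true_and, w]
      constructor
      · rintro ⟨i, rfl⟩; exact Subtype.property _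
      · intro hx
        exact ⟨Fin.cast hY (Y.equivFin ⟨x, hx⟩), by simp⟩
    refine le_trans ?_ (ENNReal.le_tsum w)
    rw [if_pos hw]
  · rw [hG Y hY]; exact zero_le

lemma pts_update {d n : ℕ} (w : Fin n → Zd d) (k : Fin n) (z : Zd d)
    (hw : Function.Injective w) (hz : ∀ j, w j ≠ z) :
    pts (Function.update w k z) = act (Equiv.swap (w k) z) (pts w) := by
  rw [act, Equiv.finsetCongr_apply, pts, pts, Finset.map_eq_image, Finset.image_image]
  refine Finset.image_congr fun j _ => ?_
  by_cases hj : j = k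
  · subst hj; simp
  · simp only [Function.comp_apply, Function.update_of_ne hj, Equiv.coe_toEmbedding]
    rw [Equiv.swap_apply_of_ne_of_ne (hw.ne hj) (hz j)]

/-- Moving one particle by `h`, summed over all labelled configurations. -/
lemma tsum_move_le {d n : ℕ} (φ : Finset (Zd d) → ℝ) (k : Fin n) (h : Zd d) :
    (∑' w : Fin n → Zd d, open Classical in if Function.Injective w then
        esq (φ (act (Equiv.swap (w k) (w k + h)) (pts w)) - φ (pts w)) else 0)
      ≤ (n : ℝ≥0∞) ^ n * swapEnergy φ h := by
  classical
  let G : Finset (Zd d) → ℝ≥0∞ := fun Y =>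
    if Y.card = n then ∑' x : Zd d, esq (φ (act (Equiv.swap x (x + h)) Y) - φ Y) else 0
  calc _ ≤ ∑' w : Fin n → Zd d, G (pts w) := by
        refine ENNReal.tsum_le_tsum fun w => ?_
        simp only [G, card_pts_iff]
        split_ifs
        · exact ENNReal.le_tsum
            (f := fun x => esq (φ (act (Equiv.swap x (x + h)) (pts w)) - φ (pts w))) (w k)
        · exact le_rfl
    _ ≤ (n : ℝ≥0∞) ^ n * ∑' Y, G Y := tsum_pts_le G fun Y hY => if_neg hY
    _ ≤ (n : ℝ≥0∞) ^ n * swapEnergy φ h := by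
        gcongr
        unfold swapEnergy permEnergy
        rw [ENNReal.tsum_comm]
        refine ENNReal.tsum_le_tsum fun Y => ?_
        simp only [G]
        split_ifs
        · exact le_rfl
        · exact zero_le

/-- The targets `w + h` collide neither with each other nor with the starting points `w`. -/
def NoCollision {d n : ℕ} (w h : Fin n → Zd d) : Prop :=
  (∀ k j, w k + h k ≠ w j) ∧ ∀ k j, k ≠ j → w k + h k ≠ w j + h j

/-- The displacement that moves only the particles with label below `m`. -/
def partialShift {d n : ℕ} (h : Fin n → Zd d) (m : ℕ) : Fin n → Zd d :=
  fun i => if i.val < m then h i else 0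

lemma partialShift_injective {d n : ℕ} {w h : Fin n → Zd d} (hw : Function.Injective w)
    (hg : NoCollision w h) (m : ℕ) : Function.Injective (w + partialShift h m) := by
  intro i j hij
  by_contra hne
  simp only [Pi.add_apply, partialShift] at hij
  split_ifs at hij
  · exact hg.2 i j hne hij
  · rw [add_zero] at hij; exact hg.1 i j hij
  · rw [add_zero] at hij; exact hg.1 j i hij.symm
  · rw [add_zero, add_zero] at hij; exact hne (hw hij)

lemma pts_partialShift_succ {d n : ℕ} {w h : Fin n → Zd d} (hw : Function.Injective w)
    (hg : NoCollision w h) (k : Fin n) :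
    pts (w + partialShift h (k.val + 1))
      = act (Equiv.swap ((w + partialShift h k.val) k) ((w + partialShift h k.val) k + h k))
          (pts (w + partialShift h k.val)) := by
  have hk : (w + partialShift h k.val) k = w k := by simp [partialShift]
  rw [← pts_update _ k _ (partialShift_injective hw hg _), hk]
  · congr 1
    ext1 j
    by_cases hj : j = k
    · subst hj; simp [partialShift]
    · have : j.val ≠ k.val := fun h => hj (Fin.ext h)
      have h2 : (j.val < k.val + 1) = (j.val < k.val) := by
        rw [eq_iff_iff]; omega
      simp [partialShift, Function.update_of_ne hj, h2]
  · intro j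
    rw [hk]
    simp only [Pi.add_apply, partialShift]
    split_ifs with hlt
    · exact hg.2 j k fun h => by subst h; omega
    · rw [add_zero]; exact (hg.1 k j).symm

/-- Displacing all the particles one after the other, without collisions. -/
lemma tsum_shift_le {d n : ℕ} (φ : Finset (Zd d) → ℝ) (h : Fin n → Zd d) {B : ℝ≥0∞}
    (hB : ∀ k, swapEnergy φ (h k) ≤ B) :
    (∑' w : Fin n → Zd d, open Classical in if Function.Injective w ∧ NoCollision w h then
        esq (φ (pts (w + h)) - φ (pts w)) else 0) ≤ (n : ℝ≥0∞) ^ (n + 2) * B := by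
  classical
  let Q : Fin n → (Fin n → Zd d) → ℝ≥0∞ := fun k w => if Function.Injective w then
        esq (φ (act (Equiv.swap (w k) (w k + h k)) (pts w)) - φ (pts w)) else 0
  calc _ ≤ ∑' w : Fin n → Zd d, (n : ℝ≥0∞) * ∑ k, Q k (w + partialShift h k.val) := by
        refine ENNReal.tsum_le_tsum fun w => ?_
        split_ifs with hw
        · obtain ⟨hw, hg⟩ := hw
          let a : ℕ → ℝ := fun m => φ (pts (w + partialShift h m))
          have h0 : w + partialShift h 0 = w := by ext1 i; simp [partialShift]
          have hn : w + partialShift h n = w + h := by ext1 i; simp [partialShift]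
          have htel : φ (pts (w + h)) - φ (pts w) = ∑ k : Fin n, (a (k.val + 1) - a k.val) := by
            rw [Fin.sum_univ_eq_sum_range (fun m => a (m + 1) - a m), Finset.sum_range_sub]
            simp only [a, h0, hn]
          have hQ : ∀ k : Fin n, Q k (w + partialShift h k.val)
              = ENNReal.ofReal ((a (k.val + 1) - a k.val) ^ 2) := by
            intro k
            simp only [Q, if_pos (partialShift_injective hw hg k.val), a]
            rw [pts_partialShift_succ hw hg k, esq]
          simp_rw [hQ]
          rw [← ENNReal.ofReal_sum_of_nonneg fun _ _ => sq_nonneg _, htel,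
            ← ENNReal.ofReal_natCast, ← ENNReal.ofReal_mul (Nat.cast_nonneg n)]
          refine ENNReal.ofReal_le_ofReal ?_
          simpa using sq_sum_le_card_mul_sum_sq (s := (Finset.univ : Finset (Fin n)))
            (f := fun k => a (k.val + 1) - a k.val)
        · exact zero_le
    _ = (n : ℝ≥0∞) * ∑ k, ∑' w : Fin n → Zd d, Q k w := by
        rw [ENNReal.tsum_mul_left, Summable.tsum_finsetSum fun _ _ => ENNReal.summable]
        congr 1
        exact Finset.sum_congr rfl fun k _ =>
          (Equiv.addRight (partialShift h k.val)).tsum_eq (Q k)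
    _ ≤ (n : ℝ≥0∞) * ∑ _k : Fin n, (n : ℝ≥0∞) ^ n * B := by
        gcongr with k
        exact (tsum_move_le φ k (h k)).trans (by gcongr; exact hB k)
    _ = (n : ℝ≥0∞) ^ (n + 2) * B := by
        rw [Finset.sum_const, Finset.card_univ, Fintype.card_fin, nsmul_eq_mul]; ring

/-- A constraint prescribing one coordinate in terms of the others costs a factor `|Λ|`. -/
lemma card_filter_coord_le {d n : ℕ} (Λ : Finset (Zd d)) (k : Fin n)
    (c : (Fin n → Zd d) → Zd d)
    (hc : ∀ h h' : Fin n → Zd d, (∀ j, j ≠ k → h j = h' j) → c h = c h') :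
    ((Fintype.piFinset fun _ : Fin n => Λ).filter fun h => h k = c h).card ≤ Λ.card ^ (n - 1) := by
  have : (Fintype.piFinset fun _ : {j : Fin n // j ≠ k} => Λ).card = Λ.card ^ (n - 1) := by
    rw [Fintype.card_piFinset]
    simp [Fintype.card_subtype_compl]
  rw [← this]
  refine Finset.card_le_card_of_injOn (fun h j => h j.val) ?_ ?_
  · intro h hh
    have hh := (Finset.mem_filter.mp hh).1
    exact Fintype.mem_piFinset.mpr fun j => Fintype.mem_piFinset.mp hh j.val
  · intro h hh h' hh' heq
    have heq' : ∀ j, j ≠ k → h j = h' j := fun j hj => congrFun heq ⟨j, hj⟩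
    ext1 j
    by_cases hj : j = k
    · subst hj
      rw [(Finset.mem_filter.mp hh).2, (Finset.mem_filter.mp hh').2]
      exact hc h h' heq'
    · exact heq' j hj

open Classical in
lemma card_collision_le {d n : ℕ} (Λ : Finset (Zd d)) (w : Fin n → Zd d) :
    ((Fintype.piFinset fun _ : Fin n => Λ).filter fun h => ¬ NoCollision w h).card
      ≤ 2 * n ^ 2 * Λ.card ^ (n - 1) := by
  set X := Fintype.piFinset fun _ : Fin n => Λ
  let U : Fin n × Fin n → Finset (Fin n → Zd d) := fun p =>
    X.filter fun h => h p.1 = w p.2 - w p.1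
  let V : Fin n × Fin n → Finset (Fin n → Zd d) := fun p =>
    X.filter fun h => p.1 ≠ p.2 ∧ h p.1 = w p.2 + h p.2 - w p.1
  have hsub : (X.filter fun h => ¬ NoCollision w h)
      ⊆ (Finset.univ.biUnion U) ∪ (Finset.univ.biUnion V) := by
    intro h hh
    obtain ⟨hX, hh⟩ := Finset.mem_filter.mp hh
    rw [Finset.mem_union, Finset.mem_biUnion, Finset.mem_biUnion]
    by_contra hcon
    push Not at hcon
    refine hh ⟨fun k j hkj => ?_, fun k j hne hkj => ?_⟩
    · exact hcon.1 (k, j) (Finset.mem_univ _)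
        (Finset.mem_filter.mpr ⟨hX, eq_sub_of_add_eq' hkj⟩)
    · exact hcon.2 (k, j) (Finset.mem_univ _)
        (Finset.mem_filter.mpr ⟨hX, hne, eq_sub_of_add_eq' hkj⟩)
  have hU : ∀ p, (U p).card ≤ Λ.card ^ (n - 1) := fun p =>
    card_filter_coord_le Λ p.1 (fun _ => w p.2 - w p.1) fun _ _ _ => rfl
  have hV : ∀ p, (V p).card ≤ Λ.card ^ (n - 1) := by
    intro p
    by_cases hp : p.1 = p.2
    · simp [V, hp]
    · refine le_trans (Finset.card_le_card fun h hh => ?_)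
        (card_filter_coord_le Λ p.1 (fun h => w p.2 + h p.2 - w p.1) fun h h' hj => ?_)
      · have := Finset.mem_filter.mp hh
        exact Finset.mem_filter.mpr ⟨this.1, this.2.2⟩
      · simp only [hj p.2 (Ne.symm hp)]
  have h2 : ∀ W : Fin n × Fin n → Finset (Fin n → Zd d),
      (∀ p, (W p).card ≤ Λ.card ^ (n - 1)) →
      (Finset.univ.biUnion W).card ≤ n ^ 2 * Λ.card ^ (n - 1) := by
    intro W hW
    refine Finset.card_biUnion_le.trans ((Finset.sum_le_card_nsmul _ _ _ fun p _ => hW p).trans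
      (le_of_eq ?_))
    simp [pow_two]
  calc _ ≤ _ := Finset.card_le_card hsub
    _ ≤ _ := Finset.card_union_le _ _
    _ ≤ n ^ 2 * Λ.card ^ (n - 1) + n ^ 2 * Λ.card ^ (n - 1) := add_le_add (h2 U hU) (h2 V hV)
    _ = _ := by ring

/-- In a box with at least `4n²` sites, at least half of the displacements avoid collisions. -/
lemma card_noCollision_ge {d n : ℕ} (hn : 1 ≤ n) (Λ : Finset (Zd d)) (hΛ : 4 * n ^ 2 ≤ Λ.card)
    (w : Fin n → Zd d) :
    Λ.card ^ n ≤ 2 * (open Classical in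
      ((Fintype.piFinset fun _ : Fin n => Λ).filter fun h => NoCollision w h).card) := by
  classical
  have h1 := card_collision_le Λ w
  have h2 := Finset.card_filter_add_card_filter_not (s := Fintype.piFinset fun _ : Fin n => Λ)
    (fun h => NoCollision w h)
  rw [Fintype.card_piFinset] at h2
  simp only [Finset.prod_const, Finset.card_univ, Fintype.card_fin] at h2
  have h3 : 4 * n ^ 2 * Λ.card ^ (n - 1) ≤ Λ.card ^ n := by
    calc _ ≤ Λ.card * Λ.card ^ (n - 1) := Nat.mul_le_mul_right _ hΛ
      _ = Λ.card ^ n := by rw [← pow_succ', Nat.sub_add_cancel hn]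
  have h4 : 4 * n ^ 2 * Λ.card ^ (n - 1) = 2 * (2 * n ^ 2 * Λ.card ^ (n - 1)) := by ring
  omega

/-! ### The Nash inequality for the coefficients -/

lemma esq_eq (a : ℝ) : esq a = ENNReal.ofReal |a| * ENNReal.ofReal |a| := by
  rw [esq, ← ENNReal.ofReal_mul (abs_nonneg a), abs_mul_abs_self, pow_two]

lemma tsum_esq_le {ι : Type*} (φ : ι → ℝ) :
    ∑' Y, esq (φ Y) ≤ (∑' Y, ENNReal.ofReal |φ Y|) ^ 2 := by
  rw [pow_two, ← ENNReal.tsum_mul_right]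
  refine ENNReal.tsum_le_tsum fun Y => ?_
  rw [esq_eq]
  gcongr
  exact ENNReal.le_tsum (f := fun Y => ENNReal.ofReal |φ Y|) Y

lemma esq_le_mul_add (a b : ℝ) :
    esq a ≤ 2 * (ENNReal.ofReal |a| * ENNReal.ofReal |b|) + esq (b - a) := by
  unfold esq
  rw [← ENNReal.ofReal_mul (abs_nonneg a), ← ENNReal.ofReal_ofNat 2,
    ← ENNReal.ofReal_mul (by norm_num), ← ENNReal.ofReal_add (by positivity) (by positivity)]
  refine ENNReal.ofReal_le_ofReal ?_
  rw [← abs_mul]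
  nlinarith [le_abs_self (a * b), sq_nonneg b]

/-- Comparison with the average over displacements in a box: the inequality
`a² ≤ 2ab + (b - a)²`, applied to `a = φ(w)` and `b = φ(w + h)`, bounds the `ℓ²` norm by the
square of the `ℓ¹` norm over the volume plus the energy at the scale of the box. -/
lemma nash_scale {d n : ℕ} (hn : 1 ≤ n) (φ : Finset (Zd d) → ℝ)
    (hφ : ∀ Y, Y.card ≠ n → φ Y = 0) (L : ℕ) (hL : 4 * n ^ 2 ≤ (box d L).card) :
    (((box d L).card ^ n : ℕ) : ℝ≥0∞) * ∑' Y, esq (φ Y)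
      ≤ 4 * ((n : ℝ≥0∞) ^ n * ∑' Y, ENNReal.ofReal |φ Y|) ^ 2
        + 2 * (((box d L).card ^ n : ℕ) *
          ((n : ℝ≥0∞) ^ (n + 2) * (((2 * (d * L) + 1 : ℕ) : ℝ≥0∞) ^ 2 * energy φ))) := by
  classical
  set Λ := box d L
  set X := Fintype.piFinset fun _ : Fin n => Λ with hX
  have hXcard : X.card = Λ.card ^ n := by rw [hX, Fintype.card_piFinset]; simp
  set B : ℝ≥0∞ := ((2 * (d * L) + 1 : ℕ) : ℝ≥0∞) ^ 2 * energy φ with hB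
  let a : (Fin n → Zd d) → ℝ≥0∞ := fun w => ENNReal.ofReal |φ (pts w)|
  let δ : (Fin n → Zd d) → (Fin n → Zd d) → ℝ≥0∞ := fun w h =>
    if Function.Injective w ∧ NoCollision w h then esq (φ (pts (w + h)) - φ (pts w)) else 0
  have hpt : ∀ w : Fin n → Zd d, ((Λ.card ^ n : ℕ) : ℝ≥0∞) * esq (φ (pts w))
      ≤ 2 * ∑ h ∈ X, (2 * (a w * a (w + h)) + δ w h) := by
    intro w
    by_cases hw : Function.Injective w
    · calc ((Λ.card ^ n : ℕ) : ℝ≥0∞) * esq (φ (pts w))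
          ≤ ((2 * (X.filter fun h => NoCollision w h).card : ℕ) : ℝ≥0∞) * esq (φ (pts w)) := by
            gcongr
            convert card_noCollision_ge hn Λ hL w
        _ = 2 * ∑ h ∈ X.filter fun h => NoCollision w h, esq (φ (pts w)) := by
            rw [Finset.sum_const, nsmul_eq_mul]; push_cast; ring
        _ ≤ 2 * ∑ h ∈ X, (2 * (a w * a (w + h)) + δ w h) := by
            gcongr
            rw [Finset.sum_filter]
            refine Finset.sum_le_sum fun h _ => ?_
            by_cases hg : NoCollision w h
            · simp only [hg, if_true, δ, hw, and_self]
              exact esq_le_mul_add _ _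
            · rw [if_neg hg]; exact zero_le
    · have : φ (pts w) = 0 := hφ _ fun h => hw ((card_pts_iff w).mp h)
      rw [this]; simp [esq]
  have hA : ∑' w, a w ≤ (n : ℝ≥0∞) ^ n * ∑' Y, ENNReal.ofReal |φ Y| :=
    tsum_pts_le (fun Y => ENNReal.ofReal |φ Y|) fun Y hY => by simp [hφ Y hY]
  calc ((Λ.card ^ n : ℕ) : ℝ≥0∞) * ∑' Y, esq (φ Y)
      ≤ ((Λ.card ^ n : ℕ) : ℝ≥0∞) * ∑' w : Fin n → Zd d, esq (φ (pts w)) := by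
        gcongr
        exact le_tsum_pts (fun Y => esq (φ Y)) fun Y hY => by simp [hφ Y hY, esq]
    _ ≤ ∑' w : Fin n → Zd d, 2 * ∑ h ∈ X, (2 * (a w * a (w + h)) + δ w h) := by
        rw [← ENNReal.tsum_mul_left]
        exact ENNReal.tsum_le_tsum hpt
    _ = 4 * (∑' w : Fin n → Zd d, ∑ h ∈ X, a w * a (w + h))
          + 2 * ∑ h ∈ X, ∑' w : Fin n → Zd d, δ w h := by
        rw [ENNReal.tsum_mul_left, ← Summable.tsum_finsetSum fun _ _ => ENNReal.summable]
        simp_rw [Finset.sum_add_distrib, ENNReal.tsum_add, ← Finset.mul_sum, ENNReal.tsum_mul_left]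
        ring
    _ ≤ 4 * (∑' w, a w) ^ 2
          + 2 * ∑ h ∈ X, (n : ℝ≥0∞) ^ (n + 2) * B := by
        gcongr with h hh
        · rw [pow_two, ← ENNReal.tsum_mul_right]
          refine ENNReal.tsum_le_tsum fun w => ?_
          rw [← Finset.mul_sum]
          gcongr
          refine (ENNReal.sum_le_tsum X).trans (le_of_eq ?_)
          exact (Equiv.addLeft w).tsum_eq a
        · exact tsum_shift_le φ h fun k =>
            swapEnergy_box_le φ (Fintype.mem_piFinset.mp hh k)
    _ ≤ _ := by
        rw [Finset.sum_const, nsmul_eq_mul, hXcard]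
        gcongr

lemma tsum_shift_mem {d : ℕ} (Y : Finset (Zd d)) (e : Zd d) :
    (∑' x : Zd d, if x + e ∈ Y then (1 : ℝ≥0∞) else 0) = Y.card := by
  have h1 : (∑' x : Zd d, if x + e ∈ Y then (1 : ℝ≥0∞) else 0)
      = ∑' x, if x ∈ Y then (1 : ℝ≥0∞) else 0 :=
    (Equiv.addRight e).tsum_eq (fun x => if x ∈ Y then (1 : ℝ≥0∞) else 0)
  rw [h1, tsum_eq_sum (s := Y) fun x hx => if_neg hx]
  simp +contextual

lemma esq_sub_le (a b : ℝ) : esq (a - b) ≤ 2 * (esq a + esq b) := by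
  unfold esq
  rw [← ENNReal.ofReal_add (by positivity) (by positivity), ← ENNReal.ofReal_ofNat 2,
    ← ENNReal.ofReal_mul (by norm_num)]
  exact ENNReal.ofReal_le_ofReal (by nlinarith [sq_nonneg (a + b)])

lemma act_swap_mem {d : ℕ} {x y : Zd d} {Y : Finset (Zd d)} :
    (x ∈ act (Equiv.swap x y) Y ↔ y ∈ Y) ∧ (y ∈ act (Equiv.swap x y) Y ↔ x ∈ Y) := by
  simp [act, Equiv.finsetCongr_apply, Finset.mem_map_equiv]

lemma act_swap_of_notMem {d : ℕ} {x y : Zd d} {Y : Finset (Zd d)} (hx : x ∉ Y) (hy : y ∉ Y) :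
    act (Equiv.swap x y) Y = Y := by
  ext z
  simp only [act, Equiv.finsetCongr_apply, Finset.mem_map_equiv, Equiv.symm_swap]
  rw [Equiv.swap_apply_def]
  split_ifs with h1 h2
  · subst h1; simp [hx, hy]
  · subst h2; simp [hx, hy]
  · rfl

lemma permEnergy_swap_le {d : ℕ} (φ : Finset (Zd d) → ℝ) (x y : Zd d) :
    permEnergy φ (Equiv.swap x y)
      ≤ 4 * ∑' Y, ((if x ∈ Y then 1 else 0) + (if y ∈ Y then 1 else 0)) * esq (φ Y) := by
  set c : Finset (Zd d) → ℝ≥0∞ := fun Y => (if x ∈ Y then 1 else 0) + (if y ∈ Y then 1 else 0)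
    with hc
  have hcact : ∀ Y, c (act (Equiv.swap x y) Y) = c Y := fun Y => by
    simp only [hc, act_swap_mem]; rw [add_comm]
  have hre : ∑' Y, c Y * esq (φ (act (Equiv.swap x y) Y)) = ∑' Y, c Y * esq (φ Y) := by
    rw [← (act (Equiv.swap x y)).tsum_eq (fun Y => c Y * esq (φ Y))]
    simp_rw [hcact]
  calc permEnergy φ (Equiv.swap x y)
      ≤ ∑' Y, 2 * (c Y * esq (φ (act (Equiv.swap x y) Y)) + c Y * esq (φ Y)) := by
        refine ENNReal.tsum_le_tsum fun Y => ?_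
        by_cases h : x ∉ Y ∧ y ∉ Y
        · rw [act_swap_of_notMem h.1 h.2]; simp [esq]
        · have h1 : 1 ≤ c Y := by
            simp only [hc]
            by_cases hx : x ∈ Y
            · simp [hx]
            · have hy : y ∈ Y := by tauto
              simp [hx, hy]
          refine (esq_sub_le _ _).trans ?_
          rw [← mul_add]
          gcongr
          exact le_mul_of_one_le_left zero_le h1
    _ = 4 * ∑' Y, c Y * esq (φ Y) := by
        rw [ENNReal.tsum_mul_left, ENNReal.tsum_add, hre]; ring

/-- An `n`-point set meets at most `2nd` bonds, so the energy is bounded by the `ℓ²` norm. -/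
lemma energy_le {d n : ℕ} (φ : Finset (Zd d) → ℝ) (hφ : ∀ Y, Y.card ≠ n → φ Y = 0) :
    energy φ ≤ 4 * ((d : ℝ≥0∞) * (2 * n) * ∑' Y, esq (φ Y)) := by
  calc energy φ ≤ ∑' p : Zd d × Fin d, 4 * ∑' Y, ((if p.1 ∈ Y then 1 else 0)
          + (if p.1 + stdBasis d p.2 ∈ Y then 1 else 0)) * esq (φ Y) :=
        ENNReal.tsum_le_tsum fun p => permEnergy_swap_le φ _ _
    _ = 4 * ∑' Y, (∑' p : Zd d × Fin d, ((if p.1 ∈ Y then 1 else 0)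
          + (if p.1 + stdBasis d p.2 ∈ Y then 1 else 0))) * esq (φ Y) := by
        rw [ENNReal.tsum_mul_left, ENNReal.tsum_comm]
        simp_rw [ENNReal.tsum_mul_right]
    _ = 4 * ((d : ℝ≥0∞) * (2 * n) * ∑' Y, esq (φ Y)) := by
        congr 1
        rw [← ENNReal.tsum_mul_left]
        refine tsum_congr fun Y => ?_
        by_cases hY : Y.card = n
        · congr 1
          rw [ENNReal.tsum_prod (f := fun (x : Zd d) (i : Fin d) =>
            ((if x ∈ Y then (1 : ℝ≥0∞) else 0) + (if x + stdBasis d i ∈ Y then 1 else 0))),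
            ENNReal.tsum_comm, tsum_fintype]
          have h0 : (∑' x : Zd d, if x ∈ Y then (1 : ℝ≥0∞) else 0) = Y.card := by
            simpa only [add_zero] using tsum_shift_mem Y 0
          simp_rw [ENNReal.tsum_add, tsum_shift_mem, h0, hY]
          rw [Finset.sum_const, Finset.card_univ, Fintype.card_fin, nsmul_eq_mul]
          ring
        · simp [hφ Y hY, esq]

lemma card_box (d L : ℕ) : (box d L).card = (2 * L + 1) ^ d := by
  rw [box, Fintype.card_piFinset]
  simp only [Int.card_Icc, Finset.prod_const, Finset.card_univ, Fintype.card_fin]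
  congr 1
  omega

/-- The constant of the inequality at a fixed scale. -/
def scaleConst (d n : ℕ) : ℝ :=
  4 * (n : ℝ) ^ (2 * n) + 18 * (d : ℝ) ^ 2 * (n : ℝ) ^ (n + 2) + (4 * (n : ℝ) ^ 2) ^ n

lemma nash_scale_real {d n : ℕ} (hd : 1 ≤ d) (hn : 1 ≤ n) {S A E : ℝ} (hA : 0 ≤ A)
    (hE : 0 ≤ E) (φ : Finset (Zd d) → ℝ) (hφ : ∀ Y, Y.card ≠ n → φ Y = 0)
    (hS' : ∑' Y, esq (φ Y) = ENNReal.ofReal S)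
    (hA' : ∑' Y, ENNReal.ofReal |φ Y| = ENNReal.ofReal A)
    (hE' : energy φ = ENNReal.ofReal E) (hSA : S ≤ A ^ 2) (L : ℕ) (hL : 1 ≤ L) :
    S ≤ scaleConst d n * (A ^ 2 / (L : ℝ) ^ (n * d) + (L : ℝ) ^ 2 * E) := by
  have hL1 : (1 : ℝ) ≤ L := by exact_mod_cast hL
  have hL0 : (0 : ℝ) < (L : ℝ) ^ (n * d) := by positivity
  have hn1 : (1 : ℝ) ≤ n := by exact_mod_cast hn
  have hd1 : (1 : ℝ) ≤ d := by exact_mod_cast hd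
  have hLM : (L : ℝ) ^ (n * d) ≤ (((box d L).card ^ n : ℕ) : ℝ) := by
    rw [card_box]
    push_cast
    rw [← pow_mul, mul_comm d n]
    gcongr
    linarith
  have hk1 : 0 ≤ 4 * (n : ℝ) ^ (2 * n) := by positivity
  have hk2 : 0 ≤ 18 * (d : ℝ) ^ 2 * (n : ℝ) ^ (n + 2) := by positivity
  have hk3 : 0 ≤ (4 * (n : ℝ) ^ 2) ^ n := by positivity
  have ha : 0 ≤ A ^ 2 / (L : ℝ) ^ (n * d) := by positivity
  have he : 0 ≤ (L : ℝ) ^ 2 * E := by positivity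
  unfold scaleConst
  by_cases hc : 4 * n ^ 2 ≤ (box d L).card
  · have h := nash_scale hn φ hφ L hc
    rw [hS', hA', hE'] at h
    set M : ℕ := (box d L).card ^ n
    have hreal : (M : ℝ) * S ≤ 4 * ((n : ℝ) ^ n * A) ^ 2
        + 2 * (M * ((n : ℝ) ^ (n + 2) * (((2 * (d * L) + 1 : ℕ) : ℝ) ^ 2 * E))) := by
      have h2 : ENNReal.ofReal ((M : ℝ) * S) ≤ ENNReal.ofReal (4 * ((n : ℝ) ^ n * A) ^ 2
        + 2 * (M * ((n : ℝ) ^ (n + 2) * (((2 * (d * L) + 1 : ℕ) : ℝ) ^ 2 * E)))) := by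
        rw [ENNReal.ofReal_add (by positivity) (by positivity)]
        have hnA : 0 ≤ (n : ℝ) ^ n * A := by positivity
        simp only [ENNReal.ofReal_mul, ENNReal.ofReal_pow, Nat.cast_nonneg, pow_nonneg,
          hnA, ENNReal.ofReal_natCast, ENNReal.ofReal_ofNat, Nat.ofNat_nonneg]
        exact h
      exact (ENNReal.ofReal_le_ofReal_iff (by positivity)).mp h2
    have hM0 : (0 : ℝ) < M := hL0.trans_le hLM
    have h3 : S ≤ 4 * (n : ℝ) ^ (2 * n) * (A ^ 2 / M)
        + 2 * (n : ℝ) ^ (n + 2) * (((2 * (d * L) + 1 : ℕ) : ℝ) ^ 2 * E) := by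
      rw [← mul_le_mul_iff_right₀ hM0]
      refine hreal.trans (le_of_eq ?_)
      field_simp
      ring
    have h4 : A ^ 2 / M ≤ A ^ 2 / (L : ℝ) ^ (n * d) := by gcongr
    have h5 : ((2 * (d * L) + 1 : ℕ) : ℝ) ^ 2 ≤ 9 * (d : ℝ) ^ 2 * (L : ℝ) ^ 2 := by
      have : ((2 * (d * L) + 1 : ℕ) : ℝ) ≤ 3 * (d * L) := by
        push_cast; nlinarith
      calc ((2 * (d * L) + 1 : ℕ) : ℝ) ^ 2 ≤ (3 * (d * L)) ^ 2 := by gcongr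
        _ = _ := by ring
    have h6 : 2 * (n : ℝ) ^ (n + 2) * (((2 * (d * L) + 1 : ℕ) : ℝ) ^ 2 * E)
        ≤ 18 * (d : ℝ) ^ 2 * (n : ℝ) ^ (n + 2) * ((L : ℝ) ^ 2 * E) := by
      calc _ ≤ 2 * (n : ℝ) ^ (n + 2) * (9 * (d : ℝ) ^ 2 * (L : ℝ) ^ 2 * E) := by gcongr
        _ = _ := by ring
    have h7 := mul_le_mul_of_nonneg_left h4 hk1
    have := mul_nonneg hk1 he
    have := mul_nonneg hk2 ha
    have := mul_nonneg hk3 ha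
    have := mul_nonneg hk3 he
    linarith
  · -- in a small box the volume factor is bounded, and `‖·‖₂ ≤ ‖·‖₁` suffices
    have h1 : (L : ℝ) ^ (n * d) ≤ (4 * (n : ℝ) ^ 2) ^ n := by
      refine hLM.trans ?_
      push_cast
      gcongr
      have : (box d L).card ≤ 4 * n ^ 2 := by omega
      exact_mod_cast this
    have h2 : S ≤ (4 * (n : ℝ) ^ 2) ^ n * (A ^ 2 / (L : ℝ) ^ (n * d)) := by
      rw [← mul_div_assoc, le_div_iff₀ hL0]
      nlinarith [sq_nonneg A, mul_le_mul_of_nonneg_left h1 (sq_nonneg A),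
        mul_le_mul_of_nonneg_right hSA hL0.le]
    have := mul_nonneg hk1 he
    have := mul_nonneg hk1 ha
    have := mul_nonneg hk2 ha
    have := mul_nonneg hk2 he
    have := mul_nonneg hk3 he
    linarith

/-- Optimization over the scale `L`, taken of order `(A² / E)^{1 / (D + 2)}`. -/
lemma optimize {D : ℕ} (hD : 1 ≤ D) {K S A E : ℝ} (hK : 0 ≤ K) (hA : 0 ≤ A) (hE : 0 ≤ E)
    (hSA : S ≤ A ^ 2)
    (h : ∀ L : ℕ, 1 ≤ L → S ≤ K * (A ^ 2 / (L : ℝ) ^ D + (L : ℝ) ^ 2 * E)) :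
    S ≤ (K * (2 ^ D + 1) + 1) * E ^ ((D : ℝ) / (2 + D)) * A ^ (2 * (1 - (D : ℝ) / (2 + D))) := by
  have hD1 : (1 : ℝ) ≤ D := by exact_mod_cast hD
  have hα0 : 0 < (D : ℝ) / (2 + D) := by positivity
  set α : ℝ := (D : ℝ) / (2 + D) with hα
  have hβ : 1 - α = 2 / (2 + D) := by rw [hα]; field_simp; ring
  have hβ0 : 0 < 1 - α := by rw [hβ]; positivity
  have hA2 : A ^ (2 * (1 - α)) = (A ^ 2) ^ (1 - α) := by
    rw [Real.rpow_mul hA]; norm_cast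
  rw [hA2]
  have hK1 : 0 ≤ K * (2 ^ D + 1) := by positivity
  rcases hE.eq_or_lt with hE0 | hE0
  · -- with zero energy, letting the scale tend to infinity gives `S ≤ 0`
    rw [← hE0, Real.zero_rpow hα0.ne', mul_zero, zero_mul]
    by_contra hS
    push Not at hS
    obtain ⟨N, hN⟩ := exists_nat_gt (K * A ^ 2 / S)
    have h1 := h (N + 1) (by omega)
    rw [← hE0, mul_zero, add_zero] at h1
    have h2 : ((N + 1 : ℕ) : ℝ) ≤ ((N + 1 : ℕ) : ℝ) ^ D := by
      exact_mod_cast Nat.le_self_pow (by omega) (N + 1)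
    have h3 : (0 : ℝ) < ((N + 1 : ℕ) : ℝ) := by positivity
    have h4 : S ≤ K * (A ^ 2 / ((N + 1 : ℕ) : ℝ)) := h1.trans (by gcongr)
    rw [← mul_div_assoc, le_div_iff₀ h3] at h4
    rw [div_lt_iff₀ hS] at hN
    push_cast at h4
    nlinarith
  by_cases hAE : A ^ 2 ≤ E
  · calc S ≤ A ^ 2 := hSA
      _ = (A ^ 2) ^ α * (A ^ 2) ^ (1 - α) := by
        rcases hA.eq_or_lt with h0 | h0
        · rw [← h0]; simp [Real.zero_rpow hα0.ne']
        · rw [← Real.rpow_add (by positivity)]; simp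
      _ ≤ 1 * E ^ α * (A ^ 2) ^ (1 - α) := by rw [one_mul]; gcongr
      _ ≤ _ := by gcongr; linarith
  · push Not at hAE
    have hApos : 0 < A ^ 2 := hE0.trans hAE
    set r := A ^ 2 / E with hr
    have hr1 : 1 ≤ r := by rw [hr, le_div_iff₀ hE0]; linarith
    have hr0 : 0 < r := by linarith
    set t := r ^ ((1 : ℝ) / (2 + D)) with ht
    have ht1 : 1 ≤ t := Real.one_le_rpow hr1 (by positivity)
    have ht0 : 0 < t := by linarith
    have hL1 : 1 ≤ ⌊t⌋₊ := (Nat.one_le_floor_iff t).mpr ht1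
    have hLt : (⌊t⌋₊ : ℝ) ≤ t := Nat.floor_le ht0.le
    have hLt2 : t / 2 ≤ (⌊t⌋₊ : ℝ) := by
      have h1 := Nat.lt_floor_add_one t
      have h2 : (1 : ℝ) ≤ (⌊t⌋₊ : ℝ) := by exact_mod_cast hL1
      linarith
    have htD : t ^ D = r ^ α := by
      rw [ht, ← Real.rpow_natCast, ← Real.rpow_mul hr0.le, hα]
      congr 1; ring
    have ht2 : t ^ 2 = r ^ (1 - α) := by
      rw [ht, ← Real.rpow_natCast, ← Real.rpow_mul hr0.le, hβ]
      congr 1; push_cast; ring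
    have e2 : t ^ 2 * E = E ^ α * (A ^ 2) ^ (1 - α) := by
      rw [ht2, hr, Real.div_rpow hApos.le hE0.le, div_mul_eq_mul_div, div_eq_iff (by positivity)]
      rw [mul_right_comm, ← Real.rpow_add hE0]
      simp [mul_comm]
    have e1 : A ^ 2 / t ^ D = E ^ α * (A ^ 2) ^ (1 - α) := by
      rw [htD, hr, Real.div_rpow hApos.le hE0.le, Real.rpow_sub hApos, Real.rpow_one]
      field_simp
    calc S ≤ K * (A ^ 2 / (⌊t⌋₊ : ℝ) ^ D + (⌊t⌋₊ : ℝ) ^ 2 * E) := h _ hL1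
      _ ≤ K * (A ^ 2 / (t / 2) ^ D + t ^ 2 * E) := by gcongr
      _ = K * (2 ^ D + 1) * (E ^ α * (A ^ 2) ^ (1 - α)) := by
        rw [div_pow, ← e2, ← div_mul, e1, e2]; ring
      _ ≤ _ := by
        rw [← mul_assoc]
        gcongr
        linarith

/-! ### From configurations to coefficients -/

/-- Extension of `f : K_n → ℝ` by zero to all finite subsets of `ℤ^d`. -/
def extendZero {d n : ℕ} (f : Kn d n → ℝ) : Finset (Zd d) → ℝ :=
  Function.extend Subtype.val f fun _ => 0

lemma extendZero_apply {d n : ℕ} (f : Kn d n → ℝ) (Y : Kn d n) : extendZero f Y.1 = f Y :=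
  Subtype.val_injective.extend_apply f (fun _ => 0) Y

lemma extendZero_of_card_ne {d n : ℕ} (f : Kn d n → ℝ) (Y : Finset (Zd d)) (hY : Y.card ≠ n) :
    extendZero f Y = 0 := by
  refine Function.extend_apply' f (fun _ => 0) Y ?_
  rintro ⟨Z, rfl⟩
  exact hY Z.2

lemma notMem_range {d n : ℕ} {Y : Finset (Zd d)}
    (hY : Y ∉ Set.range (Subtype.val : Kn d n → Finset (Zd d))) : Y.card ≠ n :=
  fun h => hY ⟨⟨Y, h⟩, rfl⟩

lemma summable_extendZero {d n : ℕ} {f : Kn d n → ℝ} (hf : Summable fun Y => |f Y|) :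
    Summable fun Y => |extendZero f Y| := by
  rw [← Subtype.val_injective.summable_iff (g := (Subtype.val : Kn d n → Finset (Zd d)))]
  · simpa [Function.comp_def, extendZero_apply] using hf
  · intro Y hY
    simp [extendZero_of_card_ne f Y (notMem_range hY)]

lemma tsum_extendZero {d n : ℕ} (f : Kn d n → ℝ) (G : Finset (Zd d) → ℝ → ℝ)
    (hG : ∀ Y, G Y 0 = 0) : ∑' Y : Kn d n, G Y.1 (f Y) = ∑' Y, G Y (extendZero f Y) := by
  rw [← Subtype.val_injective.tsum_eq (g := (Subtype.val : Kn d n → Finset (Zd d)))]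
  · simp_rw [extendZero_apply]
  · intro Y hY
    by_contra h
    rw [Function.mem_support, extendZero_of_card_ne f Y (notMem_range h)] at hY
    exact hY (hG Y)

lemma chaosFn_eq {d n : ℕ} (ρ : ℝ) (f : Kn d n → ℝ) :
    chaosFn ρ f = chaosAll ρ (extendZero f) := by
  ext η
  exact tsum_extendZero f (fun Y a => a * etaBar ρ Y η) fun Y => zero_mul _

lemma etaBar_exchange {d : ℕ} (ρ : ℝ) (x y : Zd d) (Y : Finset (Zd d)) (η : Config d) :
    etaBar ρ Y (exchange x y η) = etaBar ρ (act (Equiv.swap x y) Y) η := by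
  have : ∀ z, exchange x y η z = η (Equiv.swap x y z) := fun z => by
    rw [exchange, Equiv.swap_apply_def]; split_ifs <;> rfl
  simp [etaBar, act, Equiv.finsetCongr_apply, this]

/-- On the chaos expansion, the Kawasaki operator acts through the coefficients. -/
lemma kawasaki_chaosAll {d : ℕ} {ρ : ℝ} (hρ : ρ ∈ Set.Ioo (0 : ℝ) 1)
    {φ : Finset (Zd d) → ℝ} (hφ : Summable fun Y => |φ Y|) (x y : Zd d) :
    kawasaki x y (chaosAll ρ φ)
      = chaosAll ρ fun Y => φ (act (Equiv.swap x y) Y) - φ Y := by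
  ext η
  have h1 : chaosAll ρ φ (exchange x y η)
      = ∑' Y, φ (act (Equiv.swap x y) Y) * etaBar ρ Y η := by
    unfold chaosAll
    rw [← (act (Equiv.swap x y)).tsum_eq]
    refine tsum_congr fun Y => ?_
    have h1 : act (1 : Equiv.Perm (Zd d)) Y = Y := Finset.map_refl
    rw [etaBar_exchange, ← act_mul, Equiv.swap_mul_self, h1]
  have hs : Summable fun Y => |φ (act (Equiv.swap x y) Y)| :=
    (act (Equiv.swap x y)).summable_iff.mpr hφ
  rw [kawasaki, h1]
  unfold chaosAll
  rw [← Summable.tsum_sub (summable_chaosAll hρ hs η) (summable_chaosAll hρ hφ η)]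
  exact tsum_congr fun Y => by ring

lemma toReal_tsum_esq {ι : Type*} (ψ : ι → ℝ) : (∑' Y, esq (ψ Y)).toReal = ∑' Y, ψ Y ^ 2 := by
  unfold esq
  rw [ENNReal.tsum_toReal_eq fun _ => ENNReal.ofReal_ne_top]
  exact tsum_congr fun Y => ENNReal.toReal_ofReal (sq_nonneg _)

lemma integral_chaosAll_sq_of_card {d n : ℕ} {ρ : ℝ} (hρ : ρ ∈ Set.Ioo (0 : ℝ) 1)
    {P : Measure (Config d)} (hP : IsBernoulliProduct ρ P)
    {φ : Finset (Zd d) → ℝ} (hφ : Summable fun Y => |φ Y|) (hc : ∀ Y, Y.card ≠ n → φ Y = 0) :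
    ∫ η, chaosAll ρ φ η ^ 2 ∂P = (ρ * (1 - ρ)) ^ n * (∑' Y, esq (φ Y)).toReal := by
  rw [integral_chaosAll_sq hρ hP hφ, toReal_tsum_esq, ← tsum_mul_left]
  refine tsum_congr fun Y => ?_
  by_cases hY : Y.card = n
  · rw [hY, mul_comm]
  · simp [hc Y hY]

/-- generalized Nash inequality. For every `n, d ≥ 1` there is a constant
`C < ∞` depending only on `n` and `d` such that for every `ρ ∈ (0,1)` and `f ∈ ℓ¹(K_n)`,
the function `F := I_n(f)` satisfies
`E_ρ[F²] ≤ C χ(ρ)^{n(1-α_n)} Ē_ρ(F)^{α_n} |||F|||_n^{2(1-α_n)}`, with `α_n = nd/(2+nd)`,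
`Ē_ρ(F) = ½ ∑_{b ∈ (ℤ^d)^*} E_ρ[(π_b F)²]` (bonds written as `{x, x+e_i}`) and
`|||F|||_n = ‖f‖_{ℓ¹(K_n)}`. -/
theorem stmt9 (d n : ℕ) (hd : 1 ≤ d) (hn : 1 ≤ n) :
    ∃ C : ℝ, 0 < C ∧
      ∀ ρ ∈ Set.Ioo (0 : ℝ) 1, ∀ P : Measure (Config d), IsBernoulliProduct ρ P →
        ∀ f : Kn d n → ℝ, (Summable fun Y => |f Y|) →
          ∫ η, (chaosFn ρ f η) ^ 2 ∂P
            ≤ C * (ρ * (1 - ρ)) ^ ((n : ℝ) * (1 - (n * d : ℝ) / (2 + n * d)))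
              * ((1 / 2 : ℝ) * ∑' p : Zd d × Fin d,
                    ∫ η, (kawasaki p.1 (p.1 + stdBasis d p.2) (chaosFn ρ f) η) ^ 2 ∂P)
                  ^ ((n * d : ℝ) / (2 + n * d))
              * (∑' Y : Kn d n, |f Y|) ^ (2 * (1 - (n * d : ℝ) / (2 + n * d))) := by
  have hD : 1 ≤ n * d := Nat.mul_pos hn hd
  have hK : 0 ≤ scaleConst d n := by unfold scaleConst; positivity
  set K := scaleConst d n
  refine ⟨2 * (K * (2 ^ (n * d) + 1) + 1), by positivity, ?_⟩
  intro ρ hρ P hP f hf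
  set φ := extendZero f with hφdef
  have hφ : Summable fun Y => |φ Y| := summable_extendZero hf
  have hc : ∀ Y, Y.card ≠ n → φ Y = 0 := extendZero_of_card_ne f
  set A := ∑' Y, |φ Y| with hA
  have hA0 : 0 ≤ A := tsum_nonneg fun _ => abs_nonneg _
  have hAf : ∑' Y : Kn d n, |f Y| = A :=
    tsum_extendZero f (fun _ a => |a|) fun _ => abs_zero
  have hA' : ∑' Y, ENNReal.ofReal |φ Y| = ENNReal.ofReal A :=
    (ENNReal.ofReal_tsum_of_nonneg (fun _ => abs_nonneg _) hφ).symm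
  have hSle : ∑' Y, esq (φ Y) ≤ ENNReal.ofReal (A ^ 2) := by
    rw [ENNReal.ofReal_pow hA0, ← hA']
    exact tsum_esq_le φ
  have hStop : ∑' Y, esq (φ Y) ≠ ⊤ := ne_top_of_le_ne_top ENNReal.ofReal_ne_top hSle
  have hEtop : energy φ ≠ ⊤ := by
    refine ne_top_of_le_ne_top ?_ (energy_le φ hc)
    finiteness
  set S := (∑' Y, esq (φ Y)).toReal with hS
  set E := (energy φ).toReal with hE
  have hSA : S ≤ A ^ 2 := ENNReal.toReal_le_of_le_ofReal (by positivity) hSle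
  have hE0 : 0 ≤ E := ENNReal.toReal_nonneg
  have nash := optimize hD hK hA0 hE0 hSA fun L hL =>
    nash_scale_real hd hn hA0 hE0 φ hc (ENNReal.ofReal_toReal hStop).symm hA'
      (ENNReal.ofReal_toReal hEtop).symm hSA L hL
  push_cast at nash
  have hχ : 0 < ρ * (1 - ρ) := mul_pos hρ.1 (by linarith [hρ.2])
  have hF2 : ∫ η, (chaosFn ρ f η) ^ 2 ∂P = (ρ * (1 - ρ)) ^ n * S := by
    rw [chaosFn_eq]
    exact integral_chaosAll_sq_of_card hρ hP hφ hc
  have hDir : ∑' p : Zd d × Fin d,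
      ∫ η, (kawasaki p.1 (p.1 + stdBasis d p.2) (chaosFn ρ f) η) ^ 2 ∂P
        = (ρ * (1 - ρ)) ^ n * E := by
    rw [hE, energy, ENNReal.tsum_toReal_eq (ENNReal.ne_top_of_tsum_ne_top hEtop),
      ← tsum_mul_left]
    refine tsum_congr fun p => ?_
    rw [chaosFn_eq, kawasaki_chaosAll hρ hφ]
    refine integral_chaosAll_sq_of_card hρ hP ?_ fun Y hY => ?_
    · have hs : Summable fun Y => |φ (act (Equiv.swap p.1 (p.1 + stdBasis d p.2)) Y)| :=
        (act _).summable_iff.mpr hφ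
      exact Summable.of_nonneg_of_le (fun _ => abs_nonneg _) (fun Y => abs_sub _ _) (hs.add hφ)
    · have hY' : (act (Equiv.swap p.1 (p.1 + stdBasis d p.2)) Y).card ≠ n := by
        rwa [act, Equiv.finsetCongr_apply, Finset.card_map]
      rw [hc _ hY, hc _ hY', sub_zero]
  rw [hF2, hDir, hAf]
  set α : ℝ := (n * d : ℝ) / (2 + n * d) with hα
  have hα0 : 0 ≤ α := by positivity
  have hα1 : α ≤ 1 := by rw [hα, div_le_one (by positivity)]; linarith
  set χ := ρ * (1 - ρ)
  have hhalf : (1 / 2 : ℝ) ≤ (1 / 2 : ℝ) ^ α := by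
    have := Real.rpow_le_rpow_of_exponent_ge (by norm_num : (0 : ℝ) < 1 / 2) (by norm_num) hα1
    rwa [Real.rpow_one] at this
  -- the powers of `χ` recombine to `χ ^ n`
  have hpow : χ ^ ((n : ℝ) * (1 - α)) * (χ ^ n) ^ α = χ ^ n := by
    rw [← Real.rpow_natCast χ n, ← Real.rpow_mul hχ.le, ← Real.rpow_add hχ]
    congr 1; ring
  have hsplit : (1 / 2 * (χ ^ n * E)) ^ α = (1 / 2) ^ α * ((χ ^ n) ^ α * E ^ α) := by
    rw [Real.mul_rpow (by norm_num) (by positivity), Real.mul_rpow (by positivity) hE0]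
  rw [hsplit]
  calc χ ^ n * S
      ≤ χ ^ n * ((K * (2 ^ (n * d) + 1) + 1) * E ^ α * A ^ (2 * (1 - α))) := by gcongr
    _ = 2 * (K * (2 ^ (n * d) + 1) + 1) * χ ^ ((n : ℝ) * (1 - α))
          * ((1 / 2) * ((χ ^ n) ^ α * E ^ α)) * A ^ (2 * (1 - α)) := by
        nth_rewrite 1 [← hpow]; ring
    _ ≤ _ := by gcongr

end
end
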